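/- (Sparse bilinear bound for intermediate layers at random initialization.) There exist absolute constants C, c > 0 such that if m ≥ C·n·L·log(n·L), then for any integer s with 1 ≤ s ≤ m/(C·L·log m), with probability at least 1 − e^{−c·s·log m} over the random matrices A and W_1,…,W_L: for all i ∈ [n], all 1 ≤ a ≤ b ≤ L, and all vectors u, v ∈ ℝ^m each having at most s nonzero entries, |uᵀ W_b D_{i,b−1} W_{b−1} ⋯ D_{i,a} W_a v| ≤ C·‖u‖·‖v‖·√((s·log m)/m). -/

import Mathlib

/-!
The proof is the moment method, with moments of order `p = ⌈s log m⌉`.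

*One layer.* For fixed `h ≠ 0` and `y`, a row `w` of a Gaussian matrix contributes
`1[⟨w, h⟩ ≥ 0] ⟨w, y⟩²` to `‖D W y‖²`, where `D` is the sign pattern of `W h`. Since `w` and `-w`
have the same law and almost surely exactly one of them opens the gate, the exponential moment of
this contribution is the average of `1` and the exponential moment of `⟨w, y⟩²`. The rows are
independent, so that `E ‖D W y‖^(2p) ≤ e^(8p²/m) ‖y‖^(2p)`.

*The product of layers.* The matrices are integrated out from the last layer to the first:
`uᵀ W_b y` is Gaussian given the earlier layers, and each gated layer costs a factor `e^(8p²/m)`.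
Since `p ≤ 2 s log m ≤ 2 m / (C L)`, all layers together cost at most `e^p`, and Markov's inequality
gives the tail of the bilinear form at fixed `u` and `v`.

*Vanishing activations.* The one-layer bound requires a nonzero activation vector. A layer maps a
nonzero vector to zero with probability `2⁻ᵐ`, so this fails with probability at most
`(L + 1) 2⁻ᵐ` per sample.

*From fixed to all sparse vectors.* Sparse vectors of the unit ball are rounded towards zero to
multiples of `1 / m`. The error is sparse, of norm at most `1 / 4`, so the supremum `K` of the form
over the sparse unit ball satisfies `K ≤ B + K / 2`, with `B` the bound on the grid. There are at
most `(m (2m + 1))^(2s) ≤ e^(6 s log m)` pairs of grid vectors, and a union bound concludes.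
-/
open MeasureTheory ProbabilityTheory

noncomputable section

namespace DNNPaper

/-! ### Elementary linear algebra on plain function matrices -/

def mulVec {p q : ℕ} (M : Fin p → Fin q → ℝ) (v : Fin q → ℝ) : Fin p → ℝ :=
  fun i => ∑ j, M i j * v j

def mmul {p q r : ℕ} (M : Fin p → Fin q → ℝ) (N : Fin q → Fin r → ℝ) :
    Fin p → Fin r → ℝ :=
  fun i k => ∑ j, M i j * N j k

def transpose {p q : ℕ} (M : Fin p → Fin q → ℝ) : Fin q → Fin p → ℝ :=
  fun j i => M i j

def dot {p : ℕ} (u v : Fin p → ℝ) : ℝ := ∑ i, u i * v i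

def outer {p q : ℕ} (u : Fin p → ℝ) (v : Fin q → ℝ) : Fin p → Fin q → ℝ :=
  fun i j => u i * v j

def idMat (p : ℕ) : Fin p → Fin p → ℝ := fun i j => if i = j then 1 else 0

def diagMat {p : ℕ} (dg : Fin p → ℝ) : Fin p → Fin p → ℝ :=
  fun i j => if i = j then dg i else 0

def relu {p : ℕ} (v : Fin p → ℝ) : Fin p → ℝ := fun k => max (v k) 0

/-- diagonal entries of the ReLU sign matrix of a pre-activation vector -/
def signOf {p : ℕ} (g : Fin p → ℝ) : Fin p → ℝ := fun k => if 0 ≤ g k then 1 else 0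

/-- Euclidean norm -/
def l2 {p : ℕ} (v : Fin p → ℝ) : ℝ := Real.sqrt (∑ k, v k ^ 2)

/-- max-norm -/
def linf {p : ℕ} (v : Fin p → ℝ) : ℝ := ⨆ k, |v k|

/-- number of nonzero entries -/
def l0 {p : ℕ} (v : Fin p → ℝ) : ℕ := (Finset.univ.filter fun k => v k ≠ 0).card

/-- Frobenius norm -/
def frob {p q : ℕ} (M : Fin p → Fin q → ℝ) : ℝ := Real.sqrt (∑ i, ∑ j, M i j ^ 2)

/-- spectral norm (ℓ₂ operator norm) -/
def spec {p q : ℕ} (M : Fin p → Fin q → ℝ) : ℝ :=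
  sSup {r | ∃ v : Fin q → ℝ, l2 v ≤ 1 ∧ r = l2 (mulVec M v)}

/-- trace (Frobenius) inner product -/
def innerF {p q : ℕ} (M N : Fin p → Fin q → ℝ) : ℝ := ∑ i, ∑ j, M i j * N i j

/-- `‖W‖₂ = max_ℓ ‖W_ℓ‖₂` for a tuple of matrices -/
def tupleSpec {m L : ℕ} (W : Fin L → Fin m → Fin m → ℝ) : ℝ := ⨆ ℓ, spec (W ℓ)

/-! ### The network -/

variable {𝔡 m d L : ℕ}

/-- `Wat W ℓ` is the weight matrix of layer `ℓ ∈ {1,…,L}` (identity outside this range). -/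
def Wat (W : Fin L → Fin m → Fin m → ℝ) (ℓ : ℕ) : Fin m → Fin m → ℝ :=
  if h : 1 ≤ ℓ ∧ ℓ ≤ L then W ⟨ℓ - 1, by omega⟩ else idMat m

/-- the forward (post-activation) vectors `h_ℓ`, `ℓ = 0,1,…,L` -/
def hseq (A : Fin m → Fin 𝔡 → ℝ) (W : Fin L → Fin m → Fin m → ℝ) (x : Fin 𝔡 → ℝ) :
    ℕ → Fin m → ℝ
  | 0 => relu (mulVec A x)
  | ℓ + 1 =>
      if ℓ + 1 ≤ L then relu (mulVec (Wat W (ℓ + 1)) (hseq A W x ℓ)) else hseq A W x ℓ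

/-- the pre-activation vectors `g_ℓ`, `ℓ = 0,1,…,L` -/
def gseq (A : Fin m → Fin 𝔡 → ℝ) (W : Fin L → Fin m → Fin m → ℝ) (x : Fin 𝔡 → ℝ) :
    ℕ → Fin m → ℝ
  | 0 => mulVec A x
  | ℓ + 1 => mulVec (Wat W (ℓ + 1)) (hseq A W x ℓ)

/-- `chainProd W Dfun a b = (D_b W_b) (D_{b-1} W_{b-1}) ⋯ (D_a W_a)` where `D_ℓ` is the
diagonal matrix with entries `Dfun ℓ`; it is the identity when `b < a`, and factors with
index outside `{1,…,L}` are skipped. -/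
def chainProd (W : Fin L → Fin m → Fin m → ℝ) (Dfun : ℕ → Fin m → ℝ) (a : ℕ) :
    ℕ → Fin m → Fin m → ℝ
  | 0 => idMat m
  | b + 1 =>
      if a ≤ b + 1 ∧ b + 1 ≤ L then
        mmul (mmul (diagMat (Dfun (b + 1))) (Wat W (b + 1))) (chainProd W Dfun a b)
      else chainProd W Dfun a b

/-- `prodDW A W x a b = D_b W_b D_{b-1} W_{b-1} ⋯ D_a W_a` with the sign matrices of input `x` -/
def prodDW (A : Fin m → Fin 𝔡 → ℝ) (W : Fin L → Fin m → Fin m → ℝ) (x : Fin 𝔡 → ℝ)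
    (a b : ℕ) : Fin m → Fin m → ℝ :=
  chainProd W (fun ℓ => signOf (gseq A W x ℓ)) a b

/-- `Back_ℓ = B D_L W_L ⋯ D_ℓ W_ℓ` (equal to `B` for `ℓ = L+1`) -/
def backMat (B : Fin d → Fin m → ℝ) (A : Fin m → Fin 𝔡 → ℝ)
    (W : Fin L → Fin m → Fin m → ℝ) (x : Fin 𝔡 → ℝ) (ℓ : ℕ) : Fin d → Fin m → ℝ :=
  mmul B (prodDW A W x ℓ L)

/-- formula gradient w.r.t. `W_ℓ` with an arbitrary (fake) loss vector `v`:
`D_ℓ (Back_{ℓ+1}ᵀ v) h_{ℓ-1}ᵀ` -/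
def gradW (B : Fin d → Fin m → ℝ) (A : Fin m → Fin 𝔡 → ℝ)
    (W : Fin L → Fin m → Fin m → ℝ) (x : Fin 𝔡 → ℝ) (v : Fin d → ℝ) (ℓ : ℕ) :
    Fin m → Fin m → ℝ :=
  outer (mulVec (diagMat (signOf (gseq A W x ℓ)))
      (mulVec (transpose (backMat B A W x (ℓ + 1))) v))
    (hseq A W x (ℓ - 1))

/-- loss vector `B h_L − y` -/
def lossVec (B : Fin d → Fin m → ℝ) (A : Fin m → Fin 𝔡 → ℝ)
    (W : Fin L → Fin m → Fin m → ℝ) (x : Fin 𝔡 → ℝ) (y : Fin d → ℝ) : Fin d → ℝ :=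
  fun j => mulVec B (hseq A W x L) j - y j

/-- per-sample ℓ₂ regression loss `F_i` -/
def objFi (B : Fin d → Fin m → ℝ) (A : Fin m → Fin 𝔡 → ℝ)
    (W : Fin L → Fin m → Fin m → ℝ) (x : Fin 𝔡 → ℝ) (y : Fin d → ℝ) : ℝ :=
  (1 / 2) * l2 (lossVec B A W x y) ^ 2

/-- total objective `F` -/
def objF {n : ℕ} (B : Fin d → Fin m → ℝ) (A : Fin m → Fin 𝔡 → ℝ)
    (W : Fin L → Fin m → Fin m → ℝ) (x : Fin n → Fin 𝔡 → ℝ)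
    (y : Fin n → Fin d → ℝ) : ℝ :=
  ∑ i, objFi B A W (x i) (y i)

/-- formula gradient of the total objective w.r.t. `W_ℓ` -/
def gradF {n : ℕ} (B : Fin d → Fin m → ℝ) (A : Fin m → Fin 𝔡 → ℝ)
    (W : Fin L → Fin m → Fin m → ℝ) (x : Fin n → Fin 𝔡 → ℝ)
    (y : Fin n → Fin d → ℝ) (ℓ : ℕ) : Fin m → Fin m → ℝ :=
  ∑ i, gradW B A W (x i) (lossVec B A W (x i) (y i)) ℓ

/-! ### Random initialization -/

/-- a `p × q` random matrix with i.i.d. `N(0, v)` entries -/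
def gaussMat (p q : ℕ) (v : NNReal) : Measure (Fin p → Fin q → ℝ) :=
  Measure.pi fun _ => Measure.pi fun _ => gaussianReal 0 v

/-- joint law of `(A, W)` at random initialization -/
def initAW (𝔡 m L : ℕ) :
    Measure ((Fin m → Fin 𝔡 → ℝ) × (Fin L → Fin m → Fin m → ℝ)) :=
  (gaussMat m 𝔡 (2 / m)).prod (Measure.pi fun _ : Fin L => gaussMat m m (2 / m))

/-- joint law of `(A, W, B)` at random initialization -/
def initMeasure (𝔡 m d L : ℕ) :
    Measure ((Fin m → Fin 𝔡 → ℝ) ×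
      (Fin L → Fin m → Fin m → ℝ) × (Fin d → Fin m → ℝ)) :=
  (gaussMat m 𝔡 (2 / m)).prod
    ((Measure.pi fun _ : Fin L => gaussMat m m (2 / m)).prod (gaussMat d m (1 / d)))

/-! ### The Euclidean norm -/

section Norm

variable {p : ℕ}

theorem l2_sq (v : Fin p → ℝ) : l2 v ^ 2 = ∑ k, v k ^ 2 :=
  Real.sq_sqrt (Finset.sum_nonneg fun k _ => sq_nonneg (v k))

theorem l2_nonneg (v : Fin p → ℝ) : 0 ≤ l2 v :=
  Real.sqrt_nonneg _

theorem abs_le_l2 (v : Fin p → ℝ) (k : Fin p) : |v k| ≤ l2 v := by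
  refine Real.le_sqrt_of_sq_le ?_
  rw [sq_abs]
  exact Finset.single_le_sum (f := fun k => v k ^ 2) (fun k _ => sq_nonneg (v k))
    (Finset.mem_univ k)

theorem l2_eq_zero_iff {v : Fin p → ℝ} : l2 v = 0 ↔ v = 0 := by
  constructor
  · intro h
    funext k
    simpa [h] using abs_le_l2 v k
  · rintro rfl
    simp [l2]

theorem l2_smul (c : ℝ) (v : Fin p → ℝ) : l2 (c • v) = |c| * l2 v := by
  simp only [l2, Pi.smul_apply, smul_eq_mul, mul_pow, ← Finset.mul_sum]
  rw [Real.sqrt_mul (sq_nonneg c), Real.sqrt_sq_eq_abs]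

theorem measurable_l2 : Measurable (l2 : (Fin p → ℝ) → ℝ) := by
  unfold l2
  fun_prop

theorem measurable_dot {α : Type*} [MeasurableSpace α] {f g : α → Fin p → ℝ}
    (hf : Measurable f) (hg : Measurable g) : Measurable fun a => dot (f a) (g a) := by
  unfold dot
  fun_prop

theorem dot_comm (u v : Fin p → ℝ) : dot u v = dot v u :=
  Finset.sum_congr rfl fun _ _ => mul_comm _ _

theorem dot_neg (u v : Fin p → ℝ) : dot u (-v) = -dot u v := by
  simp [dot]

theorem neg_dot (u v : Fin p → ℝ) : dot (-u) v = -dot u v := by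
  simp [dot]

end Norm

/-! ### Linear forms of Gaussian vectors -/

/-- The law of a vector of `q` i.i.d. `N(0, v)` entries, that is, of a row of `gaussMat p q v`. -/
abbrev gaussVec (q : ℕ) (v : NNReal) : Measure (Fin q → ℝ) :=
  Measure.pi fun _ => gaussianReal 0 v

instance isProbabilityMeasure_gaussMat (p q : ℕ) (v : NNReal) :
    IsProbabilityMeasure (gaussMat p q v) := by
  unfold gaussMat
  infer_instance

theorem hasLaw_sum_gaussianReal {Ω ι : Type*} [MeasurableSpace Ω] {P : Measure Ω}
    [IsProbabilityMeasure P] {X : ι → Ω → ℝ} {v : ι → NNReal}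
    (hX : ∀ i, HasLaw (X i) (gaussianReal 0 (v i)) P) (hind : iIndepFun X P) (s : Finset ι) :
    HasLaw (∑ i ∈ s, X i) (gaussianReal 0 (∑ i ∈ s, v i)) P := by
  classical
  induction s using Finset.induction_on with
  | empty => exact ⟨by fun_prop, by simp [Measure.map_const, Pi.zero_def]⟩
  | insert i s hi ih =>
    have hindep := (hind.indepFun_finsetSum_of_notMem₀ (fun i => (hX i).aemeasurable) hi).symm
    have hmap := gaussianReal_add_gaussianReal_of_indepFun hindep (hX i).map_eq ih.map_eq
    rw [Finset.sum_insert hi, Finset.sum_insert hi]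
    exact ⟨(hX i).aemeasurable.add ih.aemeasurable, by simpa using hmap⟩

theorem hasLaw_dot_gaussianReal {Ω : Type*} [MeasurableSpace Ω] {P : Measure Ω}
    [IsProbabilityMeasure P] {q : ℕ} {X : Fin q → Ω → ℝ} {v : NNReal}
    (hX : ∀ i, HasLaw (X i) (gaussianReal 0 v) P) (hind : iIndepFun X P) (c : Fin q → ℝ) :
    HasLaw (fun ω => dot c fun i => X i ω) (gaussianReal 0 ((l2 c ^ 2).toNNReal * v)) P := by
  have hlaw i : HasLaw (fun ω => c i * X i ω)
      (gaussianReal 0 (.mk (c i ^ 2) (sq_nonneg _) * v)) P := by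
    simpa using gaussianReal_const_mul (hX i) (c i)
  have hind' : iIndepFun (fun i ω => c i * X i ω) P :=
    hind.comp (fun i r => c i * r) fun i => by fun_prop
  have hvar : (l2 c ^ 2).toNNReal * v = ∑ i, .mk (c i ^ 2) (sq_nonneg _) * v := by
    rw [l2_sq, Real.toNNReal_sum_of_nonneg fun i _ => sq_nonneg (c i), Finset.sum_mul]
    simp only [Real.toNNReal_of_nonneg (sq_nonneg _)]
  rw [hvar]
  convert hasLaw_sum_gaussianReal hlaw hind' Finset.univ using 1
  ext ω
  simp [dot]

theorem hasLaw_dot_gaussVec {q : ℕ} (v : NNReal) (y : Fin q → ℝ) :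
    HasLaw (fun w => dot w y) (gaussianReal 0 ((l2 y ^ 2).toNNReal * v)) (gaussVec q v) := by
  simp only [dot_comm _ y]
  exact hasLaw_dot_gaussianReal
    (fun i => (measurePreserving_eval (fun _ : Fin q => gaussianReal 0 v) i).hasLaw)
    (iIndepFun_pi (X := fun _ r => r) fun _ => aemeasurable_id) y

theorem hasLaw_dot_mulVec_gaussMat {p q : ℕ} (v : NNReal) (u : Fin p → ℝ) (y : Fin q → ℝ) :
    HasLaw (fun w => dot u (mulVec w y))
      (gaussianReal 0 ((l2 u ^ 2).toNNReal * ((l2 y ^ 2).toNNReal * v))) (gaussMat p q v) :=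
  hasLaw_dot_gaussianReal
    (fun i => (hasLaw_dot_gaussVec v y).comp
      (measurePreserving_eval (fun _ : Fin p => gaussVec q v) i).hasLaw)
    (iIndepFun_pi (X := fun _ w => dot w y) fun _ =>
      (measurable_dot measurable_id measurable_const).aemeasurable) u

theorem measurePreserving_neg_gaussVec (q : ℕ) (v : NNReal) :
    MeasurePreserving (fun w : Fin q → ℝ => -w) (gaussVec q v) (gaussVec q v) :=
  measurePreserving_pi (f := fun _ r => -r) _ _ fun _ =>
    ⟨measurable_neg, by simpa using gaussianReal_map_neg (μ := 0) (v := v)⟩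

theorem ae_dot_ne_zero {q : ℕ} {v : NNReal} (hv : v ≠ 0) {h : Fin q → ℝ} (hh : h ≠ 0) :
    ∀ᵐ w ∂gaussVec q v, dot w h ≠ 0 := by
  have hvar : (l2 h ^ 2).toNNReal * v ≠ 0 := by
    have : 0 < l2 h := (l2_nonneg h).lt_of_ne' (l2_eq_zero_iff.not.mpr hh)
    positivity
  have := nullSingletonClass_gaussianReal (μ := 0) hvar
  refine ((hasLaw_dot_gaussVec v h).ae_iff (p := fun r => r ≠ 0) ?_).mpr ?_
  · exact measurableSet_setOfPred.mp (measurableSet_singleton 0).compl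
  · simp [ae_iff]

/-! ### One gated Gaussian row -/

section Gate

variable {q : ℕ} {v : NNReal} {h : Fin q → ℝ}

/-- `w` and `-w` have the same law, and almost surely exactly one of them satisfies `0 ≤ ⟨w, h⟩`. -/
theorem lintegral_gate_eq (hv : v ≠ 0) (hh : h ≠ 0) {f g : (Fin q → ℝ) → ENNReal}
    (hf : Measurable f) (hg : Measurable g) (hf_even : ∀ w, f (-w) = f w)
    (hg_even : ∀ w, g (-w) = g w) :
    ∫⁻ w, (if 0 ≤ dot w h then f w else g w) ∂gaussVec q v =
      (∫⁻ w, f w ∂gaussVec q v + ∫⁻ w, g w ∂gaussVec q v) / 2 := by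
  set gate : (Fin q → ℝ) → ENNReal := fun w => if 0 ≤ dot w h then f w else g w
  have hgate : Measurable gate :=
    hf.ite (measurableSet_le measurable_const (measurable_dot measurable_id measurable_const)) hg
  have hsymm : ∀ᵐ w ∂gaussVec q v, gate w + gate (-w) = f w + g w := by
    filter_upwards [ae_dot_ne_zero hv hh] with w hw
    simp only [gate, neg_dot, hf_even, hg_even]
    rcases hw.lt_or_gt with hneg | hpos
    · rw [if_neg hneg.not_ge, if_pos (by linarith), add_comm]
    · rw [if_pos hpos.le, if_neg (by linarith)]
  rw [ENNReal.eq_div_iff two_ne_zero ENNReal.ofNat_ne_top, ← lintegral_add_left hf,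
    ← lintegral_congr_ae hsymm, lintegral_add_left hgate,
    (measurePreserving_neg_gaussVec q v).lintegral_comp hgate, two_mul]

theorem gaussVec_dot_nonpos (hv : v ≠ 0) (hh : h ≠ 0) :
    gaussVec q v {w | dot w h ≤ 0} = 1 / 2 := by
  have hmeas : MeasurableSet {w : Fin q → ℝ | dot w h ≤ 0} :=
    measurableSet_le (measurable_dot measurable_id measurable_const) measurable_const
  have hgate := lintegral_gate_eq hv (neg_ne_zero.mpr hh) (f := 1) (g := 0) measurable_one
    measurable_zero (fun _ => rfl) (fun _ => rfl)
  rw [← lintegral_indicator_one hmeas]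
  simpa [Set.indicator_apply, dot_neg] using hgate

end Gate

theorem gaussMat_relu_eq_zero {p q : ℕ} {v : NNReal} (hv : v ≠ 0) {h : Fin q → ℝ} (hh : h ≠ 0) :
    gaussMat p q v {w | relu (mulVec w h) = 0} = (1 / 2) ^ p := by
  have hrows : {w : Fin p → Fin q → ℝ | relu (mulVec w h) = 0} =
      Set.univ.pi fun _ : Fin p => {w : Fin q → ℝ | dot w h ≤ 0} := by
    ext w
    simp [relu, mulVec, dot, funext_iff]
  rw [hrows, gaussMat, Measure.pi_pi]
  simp [gaussVec_dot_nonpos hv hh]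

/-! ### Moments of one random layer -/

theorem lintegral_pow_le_lintegral_exp {α : Type*} [MeasurableSpace α] (μ : Measure α) {X : α → ℝ}
    (hX : ∀ a, 0 ≤ X a) {N : ℝ} (hN : 0 < N) (p : ℕ) :
    ∫⁻ a, ENNReal.ofReal (X a ^ p) ∂μ ≤
      ENNReal.ofReal ((N * Real.exp (-1)) ^ p) *
        ∫⁻ a, ENNReal.ofReal (Real.exp (p / N * X a)) ∂μ := by
  rw [← lintegral_const_mul' _ _ ENNReal.ofReal_ne_top]
  refine lintegral_mono fun a => ?_
  rw [← ENNReal.ofReal_mul (by positivity)]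
  refine ENNReal.ofReal_le_ofReal ?_
  have hexp : X a / N ≤ Real.exp (X a / N - 1) := by
    linarith [Real.add_one_le_exp (X a / N - 1)]
  calc X a ^ p = N ^ p * (X a / N) ^ p := by rw [← mul_pow, mul_div_cancel₀ _ hN.ne']
    _ ≤ N ^ p * Real.exp (X a / N - 1) ^ p := by
      gcongr
      exact div_nonneg (hX a) hN.le
    _ = (N * Real.exp (-1)) ^ p * Real.exp (p / N * X a) := by
      rw [mul_pow, mul_assoc, ← Real.exp_nat_mul, ← Real.exp_nat_mul, ← Real.exp_add]
      ring_nf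

theorem lintegral_exp_mul_sq_gaussianReal {v : NNReal} {l : ℝ} (hl : 2 * l * v < 1) :
    ∫⁻ x, ENNReal.ofReal (Real.exp (l * x ^ 2)) ∂gaussianReal 0 v =
      ENNReal.ofReal (√(1 - 2 * l * v))⁻¹ := by
  rcases eq_or_ne v 0 with rfl | hv
  · simp
  have : (0 : ℝ) < v := by positivity
  have hgap : 0 < 1 - 2 * l * v := by linarith
  set b : ℝ := (1 - 2 * l * v) / (2 * v)
  have hb : 0 < b := by positivity
  have hdensity (x : ℝ) : gaussianPDF 0 v x * ENNReal.ofReal (Real.exp (l * x ^ 2)) =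
      ENNReal.ofReal ((√(2 * Real.pi * v))⁻¹ * Real.exp (-b * x ^ 2)) := by
    rw [gaussianPDF, ← ENNReal.ofReal_mul (gaussianPDFReal_nonneg _ _ _), gaussianPDFReal,
      mul_assoc, ← Real.exp_add]
    congr 3
    simp only [b]
    field_simp
    ring
  rw [gaussianReal_of_var_ne_zero _ hv, lintegral_withDensity_eq_lintegral_mul _
    (measurable_gaussianPDF 0 v) (by fun_prop)]
  simp only [Pi.mul_apply, hdensity]
  rw [← ofReal_integral_eq_lintegral_ofReal ((integrable_exp_neg_mul_sq hb).const_mul _)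
    (.of_forall fun x => by positivity), integral_const_mul, integral_gaussian]
  congr 1
  rw [show Real.pi / b = 2 * Real.pi * v / (1 - 2 * l * v) by simp only [b]; field_simp,
    Real.sqrt_div (by positivity)]
  field_simp

theorem lintegral_pow_gaussianReal_le (v : NNReal) {p : ℕ} (hp : p ≠ 0) :
    ∫⁻ x, ENNReal.ofReal (x ^ (2 * p)) ∂gaussianReal 0 v ≤
      ENNReal.ofReal ((4 * p * v) ^ p) := by
  rcases eq_or_ne v 0 with rfl | hv
  · simp [hp]
  have : (0 : ℝ) < v := by positivity
  have hN : (0 : ℝ) < 4 * p * v := by positivity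
  have hrate : (p : ℝ) / (4 * p * v) = 1 / (4 * v) := by field_simp
  have hvar : 2 * (1 / (4 * v)) * (v : ℝ) = 1 / 2 := by field_simp; norm_num
  have hsqrt : (√(1 - 1 / 2))⁻¹ ≤ 2 := by
    rw [inv_le_comm₀ (by positivity) two_pos]
    exact Real.le_sqrt_of_sq_le (by norm_num)
  have hexp : Real.exp (-1) ^ p ≤ 1 / 2 :=
    (pow_le_of_le_one (Real.exp_pos _).le (by simp) hp).trans (by
      rw [Real.exp_neg, one_div]
      exact inv_anti₀ two_pos (by linarith [Real.add_one_le_exp 1]))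
  have hmoment := lintegral_pow_le_lintegral_exp (gaussianReal 0 v) (fun x => sq_nonneg x) hN p
  simp only [← pow_mul] at hmoment
  refine hmoment.trans ?_
  rw [hrate, lintegral_exp_mul_sq_gaussianReal (by rw [hvar]; norm_num), hvar,
    ← ENNReal.ofReal_mul (by positivity)]
  refine ENNReal.ofReal_le_ofReal ?_
  calc (4 * p * v * Real.exp (-1)) ^ p * (√(1 - 1 / 2))⁻¹
      ≤ (4 * p * v) ^ p * (1 / 2) * 2 := by rw [mul_pow]; gcongr
    _ = (4 * p * v) ^ p := by ring

theorem lintegral_dot_mulVec_pow_le {m q p : ℕ} (hp : p ≠ 0) (u : Fin m → ℝ) (y : Fin q → ℝ) :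
    ∫⁻ w, ENNReal.ofReal (dot u (mulVec w y) ^ (2 * p)) ∂gaussMat m q (2 / m) ≤
      ENNReal.ofReal ((8 * p / m) ^ p * l2 u ^ (2 * p) * l2 y ^ (2 * p)) := by
  rw [(hasLaw_dot_mulVec_gaussMat (2 / m) u y).lintegral_comp
    (f := fun r => ENNReal.ofReal (r ^ (2 * p))) (by fun_prop)]
  refine (lintegral_pow_gaussianReal_le _ hp).trans_eq (congrArg _ ?_)
  rw [pow_mul, pow_mul, ← mul_pow, ← mul_pow]
  push_cast
  rw [Real.coe_toNNReal _ (sq_nonneg _), Real.coe_toNNReal _ (sq_nonneg _)]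
  ring

theorem half_one_add_inv_sqrt_le {θ : ℝ} (h0 : 0 ≤ θ) (h1 : θ ≤ 1 / 4) :
    (1 + (√(1 - 2 * θ))⁻¹) / 2 ≤ Real.exp (θ / 2 + 2 * θ ^ 2) := by
  have hsqrt : (√(1 - 2 * θ))⁻¹ ≤ 1 + θ + 4 * θ ^ 2 := by
    have hgap : 0 < 1 - 2 * θ := by linarith
    rw [inv_le_iff_one_le_mul₀ (by positivity),
      ← Real.sqrt_sq (show 0 ≤ 1 + θ + 4 * θ ^ 2 by positivity), ← Real.sqrt_mul (by positivity)]
    refine Real.le_sqrt_of_sq_le ?_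
    have hcube : θ ^ 3 ≤ (1 / 4) ^ 3 := by gcongr
    nlinarith [mul_nonneg (sq_nonneg θ) (show 0 ≤ 5 - 10 * θ - 32 * θ ^ 3 by linarith)]
  linarith [Real.add_one_le_exp (θ / 2 + 2 * θ ^ 2)]

theorem lintegral_exp_gate_le {q : ℕ} {v : NNReal} (hv : v ≠ 0) {h : Fin q → ℝ} (hh : h ≠ 0)
    (y : Fin q → ℝ) {l : ℝ} (hl : 0 ≤ l) (hly : l * (l2 y ^ 2 * v) ≤ 1 / 4) :
    ∫⁻ w, ENNReal.ofReal (Real.exp (l * if 0 ≤ dot w h then dot w y ^ 2 else 0)) ∂gaussVec q v ≤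
      ENNReal.ofReal
        (Real.exp (l * (l2 y ^ 2 * v) / 2 + 2 * (l * (l2 y ^ 2 * v)) ^ 2)) := by
  set θ := l * (l2 y ^ 2 * v)
  have hvar : ((l2 y ^ 2).toNNReal * v : NNReal) = l2 y ^ 2 * (v : ℝ) := by
    rw [NNReal.coe_mul, Real.coe_toNNReal _ (sq_nonneg _)]
  have hopen : ∫⁻ w, ENNReal.ofReal (Real.exp (l * dot w y ^ 2)) ∂gaussVec q v =
      ENNReal.ofReal (√(1 - 2 * θ))⁻¹ := by
    rw [(hasLaw_dot_gaussVec v y).lintegral_comp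
        (f := fun r => ENNReal.ofReal (Real.exp (l * r ^ 2))) (by fun_prop),
      lintegral_exp_mul_sq_gaussianReal (by rw [hvar]; linarith), hvar, mul_assoc]
  have hgate := lintegral_gate_eq hv hh
    (f := fun w => ENNReal.ofReal (Real.exp (l * dot w y ^ 2))) (g := fun _ => 1)
    (by have := measurable_dot (p := q) measurable_id (measurable_const (a := y)); fun_prop)
    measurable_const (fun w => by rw [neg_dot, neg_sq]) (fun _ => rfl)
  rw [hopen, lintegral_const, measure_univ, one_mul, ← ENNReal.ofReal_one,
    ← ENNReal.ofReal_add (by positivity) zero_le_one, ← ENNReal.ofReal_ofNat 2,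
    ← ENNReal.ofReal_div_of_pos two_pos, add_comm] at hgate
  calc _ = _ := lintegral_congr fun w => by split_ifs <;> simp
    _ = _ := hgate
    _ ≤ _ := ENNReal.ofReal_le_ofReal (half_one_add_inv_sqrt_le (by positivity) hly)

theorem lintegral_pi_prod {ι X : Type*} [Fintype ι] [MeasurableSpace X] (μ : Measure X)
    [IsProbabilityMeasure μ] {f : ι → X → ENNReal} (hf : ∀ k, Measurable (f k)) :
    ∫⁻ w, ∏ k, f k (w k) ∂Measure.pi (fun _ : ι => μ) = ∏ k, ∫⁻ x, f k x ∂μ := by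
  have hprod := lintegral_prod_eq_prod_lintegral_of_indepFun Finset.univ
    (fun k (w : ι → X) => f k (w k)) (iIndepFun_pi (μ := fun _ => μ) fun k => (hf k).aemeasurable)
    fun k => (hf k).comp (measurable_pi_apply k)
  exact hprod.trans (Finset.prod_congr rfl fun k _ =>
    (measurePreserving_eval (fun _ : ι => μ) k).lintegral_comp (hf k))

/-- The gated layer `D w y`, where `D` is the sign matrix of the pre-activation vector `w h`. -/
def gated {p q : ℕ} (w : Fin p → Fin q → ℝ) (h y : Fin q → ℝ) : Fin p → ℝ :=
  fun k => signOf (mulVec w h) k * mulVec w y k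

theorem l2_gated_sq {p q : ℕ} (w : Fin p → Fin q → ℝ) (h y : Fin q → ℝ) :
    l2 (gated w h y) ^ 2 = ∑ k, if 0 ≤ dot (w k) h then dot (w k) y ^ 2 else 0 := by
  rw [l2_sq]
  refine Finset.sum_congr rfl fun k _ => ?_
  change ((if 0 ≤ dot (w k) h then 1 else 0) * dot (w k) y) ^ 2 = _
  split_ifs <;> simp

theorem lintegral_exp_l2_gated_le {q : ℕ} {v : NNReal} (hv : v ≠ 0) {h : Fin q → ℝ} (hh : h ≠ 0)
    (y : Fin q → ℝ) {l : ℝ} (hl : 0 ≤ l) (hly : l * (l2 y ^ 2 * v) ≤ 1 / 4) (p : ℕ) :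
    ∫⁻ w, ENNReal.ofReal (Real.exp (l * l2 (gated w h y) ^ 2)) ∂gaussMat p q v ≤
      ENNReal.ofReal
        (Real.exp (p * (l * (l2 y ^ 2 * v) / 2 + 2 * (l * (l2 y ^ 2 * v)) ^ 2))) := by
  have hrow : Measurable fun w : Fin q → ℝ =>
      ENNReal.ofReal (Real.exp (l * if 0 ≤ dot w h then dot w y ^ 2 else 0)) := by
    have hdot (c : Fin q → ℝ) : Measurable fun w => dot w c :=
      measurable_dot measurable_id measurable_const
    exact (((((hdot y).pow_const 2).ite (measurableSet_le measurable_const (hdot h))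
      measurable_const).const_mul l).exp).ennreal_ofReal
  calc _ = ∫⁻ w, ∏ k, ENNReal.ofReal
        (Real.exp (l * if 0 ≤ dot (w k) h then dot (w k) y ^ 2 else 0)) ∂gaussMat p q v := by
        simp only [l2_gated_sq, Finset.mul_sum, Real.exp_sum,
          ENNReal.ofReal_prod_of_nonneg fun _ _ => (Real.exp_pos _).le]
    _ = ∏ _ : Fin p, ∫⁻ w, ENNReal.ofReal
        (Real.exp (l * if 0 ≤ dot w h then dot w y ^ 2 else 0)) ∂gaussVec q v :=
        lintegral_pi_prod (gaussVec q v) fun _ => hrow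
    _ ≤ _ := Finset.prod_le_prod' fun _ _ => lintegral_exp_gate_le hv hh y hl hly
    _ = _ := by
        rw [Finset.prod_const, Finset.card_univ, Fintype.card_fin,
          ← ENNReal.ofReal_pow (Real.exp_pos _).le, ← Real.exp_nat_mul]

theorem lintegral_l2_gated_pow_le {m q p : ℕ} (hpm : 8 * p ≤ m) {h : Fin q → ℝ} (hh : h ≠ 0)
    (y : Fin q → ℝ) :
    ∫⁻ w, ENNReal.ofReal (l2 (gated w h y) ^ (2 * p)) ∂gaussMat m q (2 / m) ≤
      ENNReal.ofReal (Real.exp (8 * p ^ 2 / m) * l2 y ^ (2 * p)) := by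
  rcases Nat.eq_zero_or_pos p with rfl | hp
  · simp
  rcases eq_or_ne y 0 with rfl | hy
  · have hgated (w : Fin m → Fin q → ℝ) : gated w h 0 = 0 := by
      ext
      simp [gated, mulVec]
    simp [hgated, l2_eq_zero_iff.mpr rfl, hp.ne']
  have hm : (0 : ℝ) < m := by exact_mod_cast (by omega : 0 < m)
  have hpm' : 8 * (p : ℝ) ≤ m := by exact_mod_cast hpm
  have hy_pos : 0 < l2 y := (l2_nonneg y).lt_of_ne' (l2_eq_zero_iff.not.mpr hy)
  have hrate : (p : ℝ) / l2 y ^ 2 * (l2 y ^ 2 * ((2 / m : NNReal) : ℝ)) = 2 * p / m := by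
    push_cast
    field_simp
  have hmoment := lintegral_pow_le_lintegral_exp (gaussMat m q (2 / m))
    (fun w => sq_nonneg (l2 (gated w h y))) (pow_pos hy_pos 2) p
  simp only [← pow_mul] at hmoment
  have hv : (2 / m : NNReal) ≠ 0 := by
    have : m ≠ 0 := by omega
    positivity
  have hexp := lintegral_exp_l2_gated_le hv hh y (l := p / l2 y ^ 2) (by positivity)
    (by rw [hrate, div_le_iff₀ hm]; linarith) m
  rw [hrate] at hexp
  refine hmoment.trans ((mul_le_mul_right hexp _).trans_eq ?_)
  rw [← ENNReal.ofReal_mul (by positivity), mul_pow, ← pow_mul, mul_assoc, ← Real.exp_nat_mul,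
    ← Real.exp_add, mul_comm (l2 y ^ _)]
  congr 3
  field_simp
  ring

/-! ### The layers as a Markov chain -/

theorem mulVec_mmul {p q r : ℕ} (M : Fin p → Fin q → ℝ) (N : Fin q → Fin r → ℝ) (v : Fin r → ℝ) :
    mulVec (mmul M N) v = mulVec M (mulVec N v) :=
  (Matrix.mulVec_mulVec v M N).symm

theorem mulVec_diagMat {p : ℕ} (D v : Fin p → ℝ) : mulVec (diagMat D) v = fun k => D k * v k := by
  ext i
  simp [mulVec, diagMat]

theorem mulVec_idMat {p : ℕ} (v : Fin p → ℝ) : mulVec (idMat p) v = v := by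
  ext i
  simp [mulVec, idMat]

theorem relu_mulVec_zero {p q : ℕ} (M : Fin p → Fin q → ℝ) : relu (mulVec M 0) = 0 := by
  ext k
  simp [relu, mulVec]

theorem measurable_mulVec {α : Type*} [MeasurableSpace α] {p q : ℕ}
    {M : α → Fin p → Fin q → ℝ} {v : α → Fin q → ℝ} (hM : Measurable M) (hv : Measurable v) :
    Measurable fun z => mulVec (M z) (v z) := by
  unfold mulVec
  fun_prop

theorem measurable_relu {p : ℕ} : Measurable (relu (p := p)) := by
  unfold relu
  fun_prop

theorem measurable_signOf {p : ℕ} : Measurable (signOf (p := p)) :=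
  measurable_pi_lambda _ fun k =>
    measurable_const.ite (measurableSet_le measurable_const (measurable_pi_apply k))
      measurable_const

theorem measurable_gated {α : Type*} [MeasurableSpace α] {p q : ℕ} {M : α → Fin p → Fin q → ℝ}
    {h y : α → Fin q → ℝ} (hM : Measurable M) (hh : Measurable h) (hy : Measurable y) :
    Measurable fun z => gated (M z) (h z) (y z) :=
  measurable_pi_lambda _ fun k =>
    ((measurable_pi_apply k).comp (measurable_signOf.comp (measurable_mulVec hM hh))).mul
      ((measurable_pi_apply k).comp (measurable_mulVec hM hy))

/-- The space of weights `(A, (W_1, …, W_L))` carrying `initAW 𝔡 m L`. The entry `j : Fin L` of the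
second component is the matrix of layer `j + 1`. -/
abbrev Weights (𝔡 m L : ℕ) : Type :=
  (Fin m → Fin 𝔡 → ℝ) × (Fin L → Fin m → Fin m → ℝ)

/-- The pair of the activation vector `h_ℓ` and of `D_ℓ W_ℓ ⋯ D_a W_a v`. Layer `ℓ + 1` maps this
pair to the next one using only its own weight matrix. -/
def chainState (x : Fin 𝔡 → ℝ) (a : ℕ) (v : Fin m → ℝ) (ℓ : ℕ) (z : Weights 𝔡 m L) :
    (Fin m → ℝ) × (Fin m → ℝ) :=
  (hseq z.1 z.2 x ℓ, mulVec (prodDW z.1 z.2 x a ℓ) v)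

section ChainState

variable (x : Fin 𝔡 → ℝ) (a : ℕ) (v : Fin m → ℝ)

theorem chainState_zero (z : Weights 𝔡 m L) :
    chainState x a v 0 z = (relu (mulVec z.1 x), v) :=
  Prod.ext rfl (mulVec_idMat v)

theorem Wat_succ (W : Fin L → Fin m → Fin m → ℝ) (j : Fin L) : Wat W (j + 1) = W j := by
  simp [Wat, Nat.succ_le_of_lt j.isLt]

theorem chainState_succ (j : Fin L) (z : Weights 𝔡 m L) :
    chainState x a v (j + 1) z =
      (relu (mulVec (z.2 j) (chainState x a v j z).1),
        if a ≤ j + 1 then gated (z.2 j) (chainState x a v j z).1 (chainState x a v j z).2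
        else (chainState x a v j z).2) := by
  have hj : (j : ℕ) + 1 ≤ L := j.isLt
  refine Prod.ext ?_ ?_
  · simp [chainState, hseq, hj, Wat_succ]
  · by_cases ha : a ≤ j + 1
    · simp only [chainState, prodDW, chainProd, ha, hj, and_self, if_true, mulVec_mmul,
        mulVec_diagMat, gseq, Wat_succ]
      rfl
    · simp [chainState, prodDW, chainProd, ha]

theorem chainState_update {ℓ : ℕ} {j : Fin L} (hℓ : ℓ ≤ j) (A : Fin m → Fin 𝔡 → ℝ)
    (W : Fin L → Fin m → Fin m → ℝ) (w : Fin m → Fin m → ℝ) :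
    chainState x a v ℓ (A, Function.update W j w) = chainState x a v ℓ (A, W) := by
  induction ℓ with
  | zero => rw [chainState_zero, chainState_zero]
  | succ ℓ ih =>
    have hne : (⟨ℓ, by omega⟩ : Fin L) ≠ j := Fin.ne_of_lt hℓ
    have hstep := chainState_succ x a v (L := L) ⟨ℓ, by omega⟩
    simp only at hstep
    rw [hstep, hstep, ih (by omega)]
    simp only [Function.update_of_ne hne]

theorem measurable_chainState {ℓ : ℕ} (hℓ : ℓ ≤ L) :
    Measurable (chainState x a v ℓ : Weights 𝔡 m L → _) := by
  induction ℓ with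
  | zero =>
    simp only [funext (chainState_zero x a v)]
    exact (measurable_relu.comp (measurable_mulVec measurable_fst measurable_const)).prodMk
      measurable_const
  | succ ℓ ih =>
    have hprev := ih (by omega)
    have hW : Measurable fun z : Weights 𝔡 m L => z.2 ⟨ℓ, hℓ⟩ := by fun_prop
    rw [funext (chainState_succ x a v (L := L) ⟨ℓ, hℓ⟩)]
    refine (measurable_relu.comp (measurable_mulVec hW hprev.fst)).prodMk ?_
    split_ifs
    · exact measurable_gated hW hprev.fst hprev.snd
    · exact hprev.snd

/-- The weights for which the activation vector `h_ℓ` of the input `x` does not vanish. -/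
def alive (x : Fin 𝔡 → ℝ) (ℓ : ℕ) : Set (Weights 𝔡 m L) :=
  {z | hseq z.1 z.2 x ℓ ≠ 0}

theorem alive_antitone : Antitone (alive x : ℕ → Set (Weights 𝔡 m L)) := by
  refine antitone_nat_of_succ_le fun ℓ z hz h0 => hz ?_
  rw [hseq, h0, relu_mulVec_zero, ite_self]

theorem measurableSet_fst_ne_zero : MeasurableSet {s : (Fin m → ℝ) × (Fin m → ℝ) | s.1 ≠ 0} :=
  (measurableSet_eq_fun measurable_fst measurable_const).compl

end ChainState

/-! ### Integrating out one layer -/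

instance isProbabilityMeasure_initAW (𝔡 m L : ℕ) : IsProbabilityMeasure (initAW 𝔡 m L) := by
  unfold initAW
  infer_instance

/-- A statistic `S` that ignores layer `j + 1` is independent of its weight matrix, so that matrix
can be integrated out first, with `S` held fixed. -/
theorem setLIntegral_layer_le {α : Type*} [MeasurableSpace α] {S : Weights 𝔡 m L → α}
    (hS : Measurable S) {j : Fin L}
    (hSj : ∀ A W w, S (A, Function.update W j w) = S (A, W))
    {T : Set α} (hT : MeasurableSet T) {Ψ : α → (Fin m → Fin m → ℝ) → ENNReal}
    (hΨ : Measurable (Function.uncurry Ψ)) {G : α → ENNReal} (hG : Measurable G)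
    (hΨG : ∀ s ∈ T, ∫⁻ w, Ψ s w ∂gaussMat m m (2 / m) ≤ G s) :
    ∫⁻ z in S ⁻¹' T, Ψ (S z) (z.2 j) ∂initAW 𝔡 m L ≤ ∫⁻ z in S ⁻¹' T, G (S z) ∂initAW 𝔡 m L := by
  have hF : Measurable ((S ⁻¹' T).indicator fun z => Ψ (S z) (z.2 j)) :=
    (hΨ.comp (hS.prodMk (by fun_prop))).indicator (hS hT)
  have hG' : Measurable ((S ⁻¹' T).indicator fun z => G (S z)) :=
    (hG.comp hS).indicator (hS hT)
  rw [← lintegral_indicator (hS hT), ← lintegral_indicator (hS hT), initAW,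
    lintegral_prod _ hF.aemeasurable, lintegral_prod _ hG'.aemeasurable]
  refine lintegral_mono fun A => lintegral_le_of_lmarginal_le {j}
    (hF.comp measurable_prodMk_left) (hG'.comp measurable_prodMk_left) ?_
  rw [lmarginal_singleton, lmarginal_singleton]
  intro W
  by_cases hW : S (A, W) ∈ T
  · simpa [Function.comp_def, Set.indicator, hSj, hW] using hΨG _ hW
  · simp [Set.indicator, hSj, hW]

theorem lintegral_chainState_pow_le (x : Fin 𝔡 → ℝ) (a : ℕ) (v : Fin m → ℝ) {p : ℕ}
    (hpm : 8 * p ≤ m) {ℓ : ℕ} (hℓ : ℓ ≤ L) :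
    ∫⁻ z in alive x ℓ, ENNReal.ofReal (l2 (chainState x a v ℓ z).2 ^ (2 * p)) ∂initAW 𝔡 m L ≤
      ENNReal.ofReal (Real.exp (8 * p ^ 2 / m) ^ ℓ * l2 v ^ (2 * p)) := by
  set r := Real.exp (8 * p ^ 2 / m)
  have hr : 1 ≤ r := Real.one_le_exp (by positivity)
  induction ℓ with
  | zero =>
    simp only [chainState_zero, setLIntegral_const, pow_zero, one_mul]
    exact mul_le_of_le_one_right' prob_le_one
  | succ ℓ ih =>
    set S : Weights 𝔡 m L → _ := chainState x a v ℓ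
    have hS : Measurable S := measurable_chainState x a v (by omega)
    have hG : Measurable fun s : (Fin m → ℝ) × (Fin m → ℝ) =>
        ENNReal.ofReal (r * l2 s.2 ^ (2 * p)) :=
      (((measurable_l2.comp measurable_snd).pow_const _).const_mul r).ennreal_ofReal
    have hΨ : Measurable (Function.uncurry
        fun (s : (Fin m → ℝ) × (Fin m → ℝ)) (w : Fin m → Fin m → ℝ) =>
          ENNReal.ofReal (l2 (gated w s.1 s.2) ^ (2 * p))) :=
      ((measurable_l2.comp (measurable_gated measurable_snd measurable_fst.fst
        measurable_fst.snd)).pow_const _).ennreal_ofReal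
    have hstep : ∫⁻ z in alive x ℓ, ENNReal.ofReal (l2 (chainState x a v (ℓ + 1) z).2 ^ (2 * p))
        ∂initAW 𝔡 m L ≤ ∫⁻ z in alive x ℓ, ENNReal.ofReal (r * l2 (S z).2 ^ (2 * p))
        ∂initAW 𝔡 m L := by
      simp only [chainState_succ x a v ⟨ℓ, hℓ⟩]
      split_ifs
      · exact setLIntegral_layer_le hS (chainState_update x a v le_rfl) measurableSet_fst_ne_zero
          hΨ hG fun s hs => lintegral_l2_gated_pow_le hpm hs s.2
      · gcongr with z
        exact le_mul_of_one_le_left (pow_nonneg (l2_nonneg _) _) hr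
    calc _ ≤ _ := lintegral_mono_set (alive_antitone x ℓ.le_succ)
      _ ≤ _ := hstep
      _ = ENNReal.ofReal r * ∫⁻ z in alive x ℓ, ENNReal.ofReal (l2 (S z).2 ^ (2 * p))
          ∂initAW 𝔡 m L := by
        simp only [ENNReal.ofReal_mul (zero_le_one.trans hr)]
        exact lintegral_const_mul' _ _ ENNReal.ofReal_ne_top
      _ ≤ ENNReal.ofReal r * ENNReal.ofReal (r ^ ℓ * l2 v ^ (2 * p)) := by
        gcongr
        exact ih (by omega)
      _ = _ := by rw [← ENNReal.ofReal_mul (by positivity), ← mul_assoc, pow_succ']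

theorem lintegral_dot_chainState_pow_le (x : Fin 𝔡 → ℝ) (a : ℕ) (u v : Fin m → ℝ) {p : ℕ}
    (hp : p ≠ 0) (hpm : 8 * p ≤ m) (j : Fin L) :
    ∫⁻ z in alive x j, ENNReal.ofReal
        (dot u (mulVec (z.2 j) (chainState x a v j z).2) ^ (2 * p)) ∂initAW 𝔡 m L ≤
      ENNReal.ofReal ((8 * p / m) ^ p * l2 u ^ (2 * p) *
        (Real.exp (8 * p ^ 2 / m) ^ (j : ℕ) * l2 v ^ (2 * p))) := by
  have hG : Measurable fun s : (Fin m → ℝ) × (Fin m → ℝ) => ENNReal.ofReal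
      ((8 * p / m) ^ p * l2 u ^ (2 * p) * l2 s.2 ^ (2 * p)) :=
    (((measurable_l2.comp measurable_snd).pow_const _).const_mul _).ennreal_ofReal
  have hΨ : Measurable (Function.uncurry
      fun (s : (Fin m → ℝ) × (Fin m → ℝ)) (w : Fin m → Fin m → ℝ) =>
        ENNReal.ofReal (dot u (mulVec w s.2) ^ (2 * p))) :=
    ((measurable_dot measurable_const
      (measurable_mulVec measurable_snd measurable_fst.snd)).pow_const _).ennreal_ofReal
  have hscale : 0 ≤ (8 * p / m : ℝ) ^ p * l2 u ^ (2 * p) := by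
    have := l2_nonneg u
    positivity
  calc _ ≤ _ := setLIntegral_layer_le (measurable_chainState x a v j.isLt.le)
        (chainState_update x a v le_rfl) measurableSet_fst_ne_zero hΨ hG
        fun s _ => lintegral_dot_mulVec_pow_le hp u s.2
    _ = ENNReal.ofReal ((8 * p / m) ^ p * l2 u ^ (2 * p)) *
        ∫⁻ z in alive x j, ENNReal.ofReal (l2 (chainState x a v j z).2 ^ (2 * p))
          ∂initAW 𝔡 m L := by
      simp only [ENNReal.ofReal_mul hscale]
      exact lintegral_const_mul' _ _ ENNReal.ofReal_ne_top
    _ ≤ _ := by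
      rw [ENNReal.ofReal_mul hscale]
      gcongr
      exact lintegral_chainState_pow_le x a v hpm j.isLt.le

theorem initAW_alive_inter_dead_succ_le (hm : m ≠ 0) (x : Fin 𝔡 → ℝ) (j : Fin L) :
    initAW 𝔡 m L (alive x j ∩ (alive x (j + 1))ᶜ) ≤ (1 / 2) ^ m := by
  set S : Weights 𝔡 m L → _ := chainState x 0 0 j
  have hS : Measurable S := measurable_chainState x 0 0 j.isLt.le
  let dead : Set (((Fin m → ℝ) × (Fin m → ℝ)) × (Fin m → Fin m → ℝ)) :=
    {q | relu (mulVec q.2 q.1.1) = 0}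
  have hdead : MeasurableSet dead := measurableSet_eq_fun
    (measurable_relu.comp (measurable_mulVec measurable_snd measurable_fst.fst)) measurable_const
  have hpre : (alive x (j + 1) : Set (Weights 𝔡 m L))ᶜ = (fun z => (S z, z.2 j)) ⁻¹' dead := by
    ext z
    have := congrArg Prod.fst (chainState_succ x 0 0 j z)
    simp only [chainState] at this
    simp [alive, dead, S, chainState, this]
  have hrow (s : (Fin m → ℝ) × (Fin m → ℝ)) (hs : s.1 ≠ 0) :
      ∫⁻ w, dead.indicator 1 (s, w) ∂gaussMat m m (2 / m) ≤ (1 / 2) ^ m := by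
    rw [← gaussMat_relu_eq_zero (by positivity : (2 / m : NNReal) ≠ 0) hs]
    exact (lintegral_indicator_one (measurable_prodMk_left hdead)).le
  calc _ = ∫⁻ z in alive x j, dead.indicator 1 (S z, z.2 j) ∂initAW 𝔡 m L := by
        have hmeas : MeasurableSet ((fun z : Weights 𝔡 m L => (S z, z.2 j)) ⁻¹' dead) :=
          hS.prodMk (by fun_prop) hdead
        rw [hpre, Set.inter_comm, ← Measure.restrict_apply hmeas, ← lintegral_indicator_one hmeas]
        rfl
    _ ≤ ∫⁻ z in alive x j, (1 / 2) ^ m ∂initAW 𝔡 m L :=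
        setLIntegral_layer_le (S := S) (T := {s | s.1 ≠ 0})
          (Ψ := fun s w => dead.indicator 1 (s, w)) (G := fun _ => (1 / 2) ^ m) hS
          (chainState_update x 0 0 le_rfl) measurableSet_fst_ne_zero
          (measurable_one.indicator hdead) measurable_const hrow
    _ ≤ (1 / 2) ^ m := by
        rw [setLIntegral_const]
        exact mul_le_of_le_one_right' prob_le_one

theorem initAW_dead_le (hm : m ≠ 0) {x : Fin 𝔡 → ℝ} (hx : x ≠ 0) {ℓ : ℕ} (hℓ : ℓ ≤ L) :
    initAW 𝔡 m L (alive x ℓ)ᶜ ≤ (ℓ + 1) * (1 / 2) ^ m := by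
  induction ℓ with
  | zero =>
    have hdead : (alive x 0 : Set (Weights 𝔡 m L))ᶜ =
        {A | relu (mulVec A x) = 0} ×ˢ Set.univ := by
      ext z
      simp [alive, hseq]
    rw [hdead, initAW, Measure.prod_prod,
      gaussMat_relu_eq_zero (by positivity : (2 / m : NNReal) ≠ 0) hx]
    simp
  | succ ℓ ih =>
    calc initAW 𝔡 m L (alive x (ℓ + 1))ᶜ
        ≤ initAW 𝔡 m L ((alive x ℓ)ᶜ ∪ alive x ℓ ∩ (alive x (ℓ + 1))ᶜ) :=
          measure_mono fun z hz => (em (z ∈ alive x ℓ)).symm.imp_right fun h => ⟨h, hz⟩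
      _ ≤ (ℓ + 1) * (1 / 2) ^ m + (1 / 2) ^ m :=
          (measure_union_le _ _).trans (add_le_add (ih (by omega))
            (initAW_alive_inter_dead_succ_le hm x ⟨ℓ, hℓ⟩))
      _ = _ := by push_cast; ring

/-! ### Tail of one bilinear form -/

/-- The matrix `W_{j+1} D_j W_j ⋯ D_a W_a` of a network with weights `z` on the input `x`. -/
def layerProd (x : Fin 𝔡 → ℝ) (a : ℕ) (j : Fin L) (z : Weights 𝔡 m L) : Fin m → Fin m → ℝ :=
  mmul (z.2 j) (prodDW z.1 z.2 x a j)

theorem mulVec_layerProd (x : Fin 𝔡 → ℝ) (a : ℕ) (j : Fin L) (z : Weights 𝔡 m L) (v : Fin m → ℝ) :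
    mulVec (layerProd x a j z) v = mulVec (z.2 j) (chainState x a v j z).2 :=
  mulVec_mmul ..

theorem measurable_dot_mulVec_layerProd (x : Fin 𝔡 → ℝ) (a : ℕ) (j : Fin L) (u v : Fin m → ℝ) :
    Measurable fun z : Weights 𝔡 m L => dot u (mulVec (layerProd x a j z) v) := by
  simp only [mulVec_layerProd]
  exact measurable_dot measurable_const
    (measurable_mulVec (by fun_prop) (measurable_chainState x a v j.isLt.le).snd)

theorem initAW_alive_inter_abs_dot_ge_le (x : Fin 𝔡 → ℝ) (a : ℕ) {u v : Fin m → ℝ}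
    (hu : l2 u ≤ 1) (hv : l2 v ≤ 1) {p : ℕ} (hp : p ≠ 0) (hpm : 8 * p ≤ m) (j : Fin L) {τ : ℝ}
    (hτ : 0 < τ) :
    initAW 𝔡 m L (alive x j ∩ {z | τ ≤ |dot u (mulVec (layerProd x a j z) v)|}) ≤
      ENNReal.ofReal ((8 * p / (m * τ ^ 2)) ^ p * Real.exp (8 * p ^ 2 / m) ^ (j : ℕ)) := by
  set X : Weights 𝔡 m L → ℝ := fun z => dot u (mulVec (layerProd x a j z) v)
  have hX : Measurable X := measurable_dot_mulVec_layerProd x a j u v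
  have hmoment : ∫⁻ z in alive x j, ENNReal.ofReal (X z ^ (2 * p)) ∂initAW 𝔡 m L ≤
      ENNReal.ofReal ((8 * p / m) ^ p * Real.exp (8 * p ^ 2 / m) ^ (j : ℕ)) := by
    simp only [X, mulVec_layerProd]
    refine (lintegral_dot_chainState_pow_le x a u v hp hpm j).trans (ENNReal.ofReal_le_ofReal ?_)
    exact mul_le_mul
      (mul_le_of_le_one_right (by positivity) (pow_le_one₀ (l2_nonneg u) hu))
      (mul_le_of_le_one_right (by positivity) (pow_le_one₀ (l2_nonneg v) hv))
      (mul_nonneg (by positivity) (pow_nonneg (l2_nonneg v) _)) (by positivity)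
  have hset : {z | τ ≤ |X z|} =
      {z | ENNReal.ofReal (τ ^ (2 * p)) ≤ ENNReal.ofReal (X z ^ (2 * p))} := by
    ext z
    simp only [Set.mem_ofPred_eq]
    rw [ENNReal.ofReal_le_ofReal_iff ((even_two_mul p).pow_nonneg _),
      ← (even_two_mul p).pow_abs (X z),
      pow_le_pow_iff_left₀ hτ.le (abs_nonneg _) (by omega)]
  have hmeas : MeasurableSet {z | τ ≤ |X z|} := measurableSet_le measurable_const (by fun_prop)
  calc _ = (initAW 𝔡 m L).restrict (alive x j) {z | τ ≤ |X z|} := by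
        rw [Measure.restrict_apply hmeas, Set.inter_comm]
    _ ≤ (∫⁻ z in alive x j, ENNReal.ofReal (X z ^ (2 * p)) ∂initAW 𝔡 m L) /
        ENNReal.ofReal (τ ^ (2 * p)) := by
        rw [hset]
        exact meas_ge_le_lintegral_div (by fun_prop) (by positivity) ENNReal.ofReal_ne_top
    _ ≤ ENNReal.ofReal ((8 * p / m) ^ p * Real.exp (8 * p ^ 2 / m) ^ (j : ℕ)) /
        ENNReal.ofReal (τ ^ (2 * p)) := by gcongr
    _ = _ := by
        rw [← ENNReal.ofReal_div_of_pos (by positivity), pow_mul τ, ← div_div, div_pow (_ / _)]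
        congr 1
        ring

/-! ### Sparse nets -/

/-- The `s`-sparse vectors of the Euclidean unit ball of `ℝ^p`. -/
def sparseBall (p s : ℕ) : Set (Fin p → ℝ) :=
  {u | l0 u ≤ s ∧ l2 u ≤ 1}

section SparseBall

variable {p s : ℕ}

theorem l0_le_l0 {u g : Fin p → ℝ} (h : ∀ k, u k = 0 → g k = 0) : l0 g ≤ l0 u :=
  Finset.card_le_card <| Finset.monotone_filter_right _ fun k _ => mt (h k)

theorem l2_sq_le_l0_mul_sq {e : Fin p → ℝ} {b : ℝ} (hb : ∀ k, |e k| ≤ b) :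
    l2 e ^ 2 ≤ l0 e * b ^ 2 := by
  rw [l2_sq, l0, ← nsmul_eq_mul, ← Finset.sum_const, Finset.sum_filter]
  refine Finset.sum_le_sum fun k _ => ?_
  split_ifs with hk
  · exact sq_le_sq' (abs_le.mp (hb k)).1 (abs_le.mp (hb k)).2
  · simp [not_ne_iff.mp hk]

theorem mem_sparseBall_of_abs_le {u g : Fin p → ℝ} (hu : u ∈ sparseBall p s)
    (hg : ∀ k, |g k| ≤ |u k|) : g ∈ sparseBall p s := by
  refine ⟨(l0_le_l0 fun k hk => ?_).trans hu.1, le_trans ?_ hu.2⟩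
  · simpa [hk] using hg k
  · exact Real.sqrt_le_sqrt (Finset.sum_le_sum fun k _ => sq_le_sq.mpr (hg k))

theorem exists_mem_sparseBall_eq_smul {u : Fin p → ℝ} (hu : l0 u ≤ s) :
    ∃ u' ∈ sparseBall p s, u = l2 u • u' := by
  refine ⟨(l2 u)⁻¹ • u, ⟨(l0_le_l0 fun k hk => by simp [hk]).trans hu, ?_⟩, ?_⟩
  · rw [l2_smul, abs_of_nonneg (inv_nonneg.mpr (l2_nonneg u))]
    exact inv_mul_le_one
  · by_cases h0 : l2 u = 0
    · simp [l2_eq_zero_iff.mp h0]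
    · rw [smul_inv_smul₀ h0]

theorem exists_int_abs_le_abs_sub_le_one (a : ℝ) : ∃ z : ℤ, |(z : ℝ)| ≤ |a| ∧ |a - z| ≤ 1 := by
  rcases le_total 0 a with ha | ha
  · have hz : (0 : ℝ) ≤ ⌊a⌋ := by exact_mod_cast Int.floor_nonneg.mpr ha
    refine ⟨⌊a⌋, ?_, ?_⟩
    · rw [abs_of_nonneg hz, abs_of_nonneg ha]
      exact Int.floor_le a
    · rw [abs_le]
      constructor <;> linarith [Int.floor_le a, Int.lt_floor_add_one a]
  · have hz : (⌈a⌉ : ℝ) ≤ 0 := by exact_mod_cast Int.ceil_nonpos.mpr ha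
    refine ⟨⌈a⌉, ?_, ?_⟩
    · rw [abs_of_nonpos hz, abs_of_nonpos ha]
      exact neg_le_neg (Int.le_ceil a)
    · rw [abs_le]
      constructor <;> linarith [Int.le_ceil a, Int.ceil_lt_add_one a]

/-- The vectors with coordinates in `r⁻¹ℤ ∩ [-1, 1]` supported on some set of `s` coordinates. -/
def sparseGrid (p s r : ℕ) : Finset (Fin p → ℝ) :=
  (Finset.univ.powersetCard s).biUnion fun T => Fintype.piFinset fun k =>
    if k ∈ T then (Finset.Icc (-r : ℤ) r).image fun z : ℤ => (z / r : ℝ) else {0}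

theorem card_sparseGrid_le (p s r : ℕ) : (sparseGrid p s r).card ≤ (p * (2 * r + 1)) ^ s := by
  have hcoord : ((Finset.Icc (-r : ℤ) r).image fun z : ℤ => (z / r : ℝ)).card ≤ 2 * r + 1 :=
    Finset.card_image_le.trans (by rw [Int.card_Icc]; omega)
  calc (sparseGrid p s r).card ≤ (Finset.univ.powersetCard s).card * (2 * r + 1) ^ s := by
        refine Finset.card_biUnion_le_card_mul _ _ _ fun T hT => ?_
        rw [Fintype.card_piFinset, ← (Finset.mem_powersetCard.mp hT).2, ← Finset.prod_const,
          ← Finset.prod_subset (Finset.subset_univ T) fun k _ hk => by simp [hk]]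
        exact Finset.prod_le_prod' fun k hk => by simpa [hk] using hcoord
    _ ≤ p ^ s * (2 * r + 1) ^ s := by
        rw [Finset.card_powersetCard, Finset.card_univ, Fintype.card_fin]
        exact Nat.mul_le_mul_right _ (Nat.choose_le_pow p s)
    _ = _ := (mul_pow ..).symm

theorem exists_mem_sparseGrid {r : ℕ} (hsp : s ≤ p) (hr : r ≠ 0) {u : Fin p → ℝ}
    (hu : u ∈ sparseBall p s) :
    ∃ g ∈ sparseGrid p s r, ∀ k, |g k| ≤ |u k| ∧ |u k - g k| ≤ 1 / r := by
  have hr0 : (0 : ℝ) < r := by positivity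
  choose z hz hzu using fun k => exists_int_abs_le_abs_sub_le_one (r * u k)
  have hle (k) : |(z k : ℝ)| ≤ r * |u k| := by simpa [abs_mul] using hz k
  refine ⟨fun k => z k / r, ?_, fun k => ⟨?_, ?_⟩⟩
  · obtain ⟨T, hT, -, hTs⟩ := Finset.exists_subsuperset_card_eq
      (Finset.subset_univ (Finset.univ.filter fun k => u k ≠ 0)) hu.1 (by simpa using hsp)
    refine Finset.mem_biUnion.mpr ⟨T, by simp [Finset.mem_powersetCard, hTs], ?_⟩
    refine Fintype.mem_piFinset.mpr fun k => ?_
    split_ifs with hk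
    · refine Finset.mem_image_of_mem _ (Finset.mem_Icc.mpr (abs_le.mp ?_))
      have := (hle k).trans (mul_le_of_le_one_right hr0.le ((abs_le_l2 u k).trans hu.2))
      exact_mod_cast this
    · have huk : u k = 0 := by
        by_contra h
        exact hk (hT (by simpa using h))
      have hzk : z k = 0 := by simpa [huk] using hz k
      simp [hzk]
  · rw [abs_div, Nat.abs_cast, div_le_iff₀' hr0]
    exact hle k
  · rw [← mul_div_cancel_left₀ (u k) hr0.ne', ← sub_div, abs_div, Nat.abs_cast]
    exact div_le_div_of_nonneg_right (hzu k) hr0.le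

theorem exists_quarter_net_sparseBall {r : ℕ} (hsp : s ≤ p) (hr : r ≠ 0) (hsr : 16 * s ≤ r ^ 2) :
    ∃ N : Finset (Fin p → ℝ), N.card ≤ (p * (2 * r + 1)) ^ s ∧ (N : Set _) ⊆ sparseBall p s ∧
      ∀ u ∈ sparseBall p s, ∃ g ∈ N, (4 : ℝ) • (u - g) ∈ sparseBall p s := by
  classical
  refine ⟨(sparseGrid p s r).filter (· ∈ sparseBall p s),
    (Finset.card_filter_le _ _).trans (card_sparseGrid_le p s r),
    fun g hg => (Finset.mem_filter.mp hg).2, fun u hu => ?_⟩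
  obtain ⟨g, hgrid, hg⟩ := exists_mem_sparseGrid hsp hr hu
  refine ⟨g, Finset.mem_filter.mpr ⟨hgrid, mem_sparseBall_of_abs_le hu fun k => (hg k).1⟩, ?_⟩
  have hl0 : l0 ((4 : ℝ) • (u - g)) ≤ s := by
    refine (l0_le_l0 fun k hk => ?_).trans hu.1
    have := (hg k).1
    simp_all
  have hcoord (k) : |((4 : ℝ) • (u - g)) k| ≤ 4 / r := by
    simpa [abs_mul, div_eq_mul_inv] using (hg k).2
  refine ⟨hl0, (sq_le_one_iff₀ (l2_nonneg _)).mp ?_⟩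
  calc l2 ((4 : ℝ) • (u - g)) ^ 2
      ≤ l0 ((4 : ℝ) • (u - g)) * (4 / r) ^ 2 := l2_sq_le_l0_mul_sq hcoord
    _ ≤ s * (4 / r) ^ 2 := by gcongr
    _ = ((16 * s : ℕ) : ℝ) / (r ^ 2 : ℕ) := by push_cast; ring
    _ ≤ 1 := div_le_one_of_le₀ (by exact_mod_cast hsr) (by positivity)

end SparseBall

/-- Replacing both arguments by net points costs at most a quarter of the supremum each, so the
supremum is at most the maximum over the nets plus half of itself. -/
theorem abs_bilin_le_two_mul_of_quarter_net {E F : Type*} [AddCommGroup E] [Module ℝ E]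
    [AddCommGroup F] [Module ℝ F] (B : E →ₗ[ℝ] F →ₗ[ℝ] ℝ) {K N : Set E} {K' N' : Set F}
    (hB : BddAbove (Set.image2 (fun u v => |B u v|) K K')) (hNK : N ⊆ K)
    (hN : ∀ u ∈ K, ∃ g ∈ N, (4 : ℝ) • (u - g) ∈ K)
    (hN' : ∀ v ∈ K', ∃ g ∈ N', (4 : ℝ) • (v - g) ∈ K') {b : ℝ}
    (hb : ∀ g ∈ N, ∀ g' ∈ N', |B g g'| ≤ b) {u : E} (hu : u ∈ K) {v : F} (hv : v ∈ K') :
    |B u v| ≤ 2 * b := by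
  set S := sSup (Set.image2 (fun u v => |B u v|) K K')
  have hS (u) (hu : u ∈ K) (v) (hv : v ∈ K') : |B u v| ≤ S :=
    le_csSup hB (Set.mem_image2_of_mem hu hv)
  have hself : S ≤ b + S / 2 := by
    refine csSup_le ⟨_, Set.mem_image2_of_mem hu hv⟩ ?_
    rintro _ ⟨u, hu, v, hv, rfl⟩
    obtain ⟨g, hg, hug⟩ := hN u hu
    obtain ⟨g', hg', hvg'⟩ := hN' v hv
    have hdecomp : B u v =
        B g g' + 4⁻¹ * B g ((4 : ℝ) • (v - g')) + 4⁻¹ * B ((4 : ℝ) • (u - g)) v := by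
      simp only [map_smul, map_sub, LinearMap.smul_apply, LinearMap.sub_apply, smul_eq_mul]
      ring
    have hfirst := hS g (hNK hg) _ hvg'
    have hsecond := hS _ hug v hv
    calc |B u v| ≤ |B g g'| + |4⁻¹ * B g ((4 : ℝ) • (v - g'))| + |4⁻¹ * B ((4 : ℝ) • (u - g)) v| :=
          hdecomp ▸ abs_add_three _ _ _
      _ ≤ b + S / 2 := by
          rw [abs_mul, abs_mul, abs_of_pos (by norm_num : (0 : ℝ) < 4⁻¹)]
          linarith [hb g hg g' hg']
  linarith [hS u hu v hv]

theorem bddAbove_abs_dot_mulVec_sparseBall {p q : ℕ} (M : Fin p → Fin q → ℝ) (s : ℕ) :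
    BddAbove (Set.image2 (fun u v => |dot u (mulVec M v)|) (sparseBall p s) (sparseBall q s)) := by
  refine ⟨∑ i, ∑ j, |M i j|, ?_⟩
  rintro _ ⟨u, hu, v, hv, rfl⟩
  refine (Finset.abs_sum_le_sum_abs _ _).trans (Finset.sum_le_sum fun i _ => ?_)
  rw [abs_mul]
  refine (mul_le_of_le_one_left (abs_nonneg _) ((abs_le_l2 u i).trans hu.2)).trans ?_
  refine (Finset.abs_sum_le_sum_abs _ _).trans (Finset.sum_le_sum fun j _ => ?_)
  rw [abs_mul]
  exact mul_le_of_le_one_right (abs_nonneg _) ((abs_le_l2 v j).trans hv.2)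

/-- The bilinear form of `M` has norm at most `b` on `s`-sparse vectors. -/
def HasSparseBound {p q : ℕ} (M : Fin p → Fin q → ℝ) (s : ℕ) (b : ℝ) : Prop :=
  ∀ u v, l0 u ≤ s → l0 v ≤ s → |dot u (mulVec M v)| ≤ b * l2 u * l2 v

theorem hasSparseBound_of_quarter_net {p q s : ℕ} (M : Fin p → Fin q → ℝ)
    {N : Set (Fin p → ℝ)} {N' : Set (Fin q → ℝ)} (hNs : N ⊆ sparseBall p s)
    (hN : ∀ u ∈ sparseBall p s, ∃ g ∈ N, (4 : ℝ) • (u - g) ∈ sparseBall p s)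
    (hN' : ∀ v ∈ sparseBall q s, ∃ g ∈ N', (4 : ℝ) • (v - g) ∈ sparseBall q s) {b : ℝ}
    (hb : ∀ g ∈ N, ∀ g' ∈ N', |dot g (mulVec M g')| ≤ b) : HasSparseBound M s (2 * b) := by
  intro u v hu hv
  let B : (Fin p → ℝ) →ₗ[ℝ] (Fin q → ℝ) →ₗ[ℝ] ℝ := Matrix.toLinearMap₂' ℝ (Matrix.of M)
  have hB (u v) : dot u (mulVec M v) = B u v := (Matrix.toLinearMap₂'_apply' ..).symm
  obtain ⟨u', hu', hu⟩ := exists_mem_sparseBall_eq_smul hu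
  obtain ⟨v', hv', hv⟩ := exists_mem_sparseBall_eq_smul hv
  have hunit : |B u' v'| ≤ 2 * b := by
    refine abs_bilin_le_two_mul_of_quarter_net B ?_ hNs hN hN' ?_ hu' hv'
    · simpa only [hB] using bddAbove_abs_dot_mulVec_sparseBall M s
    · simpa only [hB] using hb
  have hscale : B u v = l2 u * l2 v * B u' v' := by
    conv_lhs => rw [hu, hv]
    simp only [map_smul, LinearMap.smul_apply, smul_eq_mul]
    ring
  rw [hB, hscale, abs_mul, abs_of_nonneg (mul_nonneg (l2_nonneg u) (l2_nonneg v))]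
  calc _ ≤ l2 u * l2 v * (2 * b) :=
        mul_le_mul_of_nonneg_left hunit (mul_nonneg (l2_nonneg u) (l2_nonneg v))
    _ = _ := by ring

theorem measure_inter_not_hasSparseBound_le {Ω : Type*} [MeasurableSpace Ω] (μ : Measure Ω)
    {p s r : ℕ} (hsp : s ≤ p) (hr : r ≠ 0) (hsr : 16 * s ≤ r ^ 2) (M : Ω → Fin p → Fin p → ℝ)
    {E : Set Ω} {τ : ℝ} {ε : ENNReal} (hε : ∀ u v, l2 u ≤ 1 → l2 v ≤ 1 →
      μ (E ∩ {ω | τ ≤ |dot u (mulVec (M ω) v)|}) ≤ ε) :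
    μ (E ∩ {ω | ¬ HasSparseBound (M ω) s (2 * τ)}) ≤ ((p * (2 * r + 1)) ^ s) ^ 2 * ε := by
  obtain ⟨N, hcard, hNs, hN⟩ := exists_quarter_net_sparseBall hsp hr hsr
  have hsub : E ∩ {ω | ¬ HasSparseBound (M ω) s (2 * τ)} ⊆
      ⋃ g ∈ N, ⋃ g' ∈ N, E ∩ {ω | τ ≤ |dot g (mulVec (M ω) g')|} := by
    rintro ω ⟨hωE, hω⟩
    by_contra hnot
    refine hω (hasSparseBound_of_quarter_net (M ω) hNs hN hN fun _ hg _ hg' => ?_)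
    by_contra hlt
    exact hnot (Set.mem_biUnion hg (Set.mem_biUnion hg' ⟨hωE, (not_le.mp hlt).le⟩))
  calc _ ≤ ∑ g ∈ N, ∑ g' ∈ N, μ (E ∩ {ω | τ ≤ |dot g (mulVec (M ω) g')|}) :=
        (measure_mono hsub).trans <| (measure_biUnion_finset_le _ _).trans <|
          Finset.sum_le_sum fun g _ => measure_biUnion_finset_le _ _
    _ ≤ ∑ _g ∈ N, ∑ _g' ∈ N, ε := Finset.sum_le_sum fun g hg =>
        Finset.sum_le_sum fun g' hg' => hε g g' (hNs hg).2 (hNs hg').2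
    _ = (N.card : ENNReal) ^ 2 * ε := by simp [sq, mul_assoc]
    _ ≤ _ := by
        gcongr
        exact_mod_cast hcard

/-! ### Union bound over layers, net points and samples -/

section Numerics

variable {s : ℕ}

theorem two_thousand_le_eight_mul_exp_six : (2000 : ℝ) ≤ 8 * Real.exp 6 := by
  have h : (2.7 : ℝ) ^ 6 ≤ Real.exp 1 ^ 6 := by
    gcongr
    linarith [Real.exp_one_gt_d9]
  rw [← Real.exp_nat_mul] at h
  norm_num at h ⊢
  linarith

theorem mul_two_le_of_width (hL : 2 ≤ L) {n : ℕ} (hn : 0 < n)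
    (h : 8 * Real.exp 6 * n * L * Real.log (n * L) ≤ m) : n * 2 ≤ m := by
  have hC := two_thousand_le_eight_mul_exp_six
  have hL' : (2 : ℝ) ≤ L := by exact_mod_cast hL
  have hn' : (1 : ℝ) ≤ n := by exact_mod_cast hn
  have hlog : 1 / 2 ≤ Real.log (n * L) := by
    have := Real.log_le_log two_pos (show (2 : ℝ) ≤ n * L by nlinarith)
    linarith [Real.log_two_gt_d9]
  have : (n * 2 : ℝ) ≤ m :=
    calc (n * 2 : ℝ) ≤ 2000 * n * 2 * (1 / 2) := by linarith
      _ ≤ 8 * Real.exp 6 * n * L * Real.log (n * L) := by gcongr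
      _ ≤ m := h
  exact_mod_cast this

theorem one_le_log_of_sparsity (hL : 0 < L) (hm : 2 ≤ m) (hs : 1 ≤ s)
    (h : 8 * Real.exp 6 * L * (s * Real.log m) ≤ m) : 1 ≤ Real.log m := by
  have hL' : (1 : ℝ) ≤ L := by exact_mod_cast hL
  have hs' : (1 : ℝ) ≤ s := by exact_mod_cast hs
  have hm' : (2 : ℝ) ≤ m := by exact_mod_cast hm
  have hlog : 1 / 2 ≤ Real.log m := by
    have := Real.log_le_log two_pos hm'
    linarith [Real.log_two_gt_d9]
  have hm1000 : (1000 : ℝ) ≤ m :=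
    calc (1000 : ℝ) = 2000 * 1 * (1 * (1 / 2)) := by norm_num
      _ ≤ 8 * Real.exp 6 * L * (s * Real.log m) := by
        gcongr
        exact two_thousand_le_eight_mul_exp_six
      _ ≤ m := h
  rw [Real.le_log_iff_exp_le (by linarith)]
  linarith [Real.exp_one_lt_d9]

/-- At moment order `p = ⌈r⌉` the base of the power is at most `e⁻¹²`, and the growth over the
layers is at most `e^p`. -/
theorem markov_bound_le_exp {r : ℝ} (hr : 1 ≤ r) (h : 8 * Real.exp 6 * L * r ≤ m) {ℓ : ℕ}
    (hℓ : ℓ < L) :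
    (8 * ⌈r⌉₊ / (m * (4 * Real.exp 6 * √(r / m)) ^ 2)) ^ ⌈r⌉₊ *
      Real.exp (8 * (⌈r⌉₊ : ℝ) ^ 2 / m) ^ ℓ ≤ Real.exp (-(11 * r)) := by
  have hC := two_thousand_le_eight_mul_exp_six
  have hℓ' : (ℓ + 1 : ℝ) ≤ L := by exact_mod_cast hℓ
  have hL : (0 : ℝ) < L := by linarith [Nat.cast_nonneg (α := ℝ) ℓ]
  have hm : (0 : ℝ) < m := lt_of_lt_of_le (by positivity) h
  have hp : r ≤ (⌈r⌉₊ : ℝ) := Nat.le_ceil r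
  have hp2 : (⌈r⌉₊ : ℝ) ≤ 2 * r := by linarith [Nat.ceil_lt_add_one (zero_le_one.trans hr)]
  generalize ⌈r⌉₊ = p at hp hp2 ⊢
  have hbase : 8 * p / (m * (4 * Real.exp 6 * √(r / m)) ^ 2) ≤ Real.exp (-12) := by
    have hsq : m * (4 * Real.exp 6 * √(r / m)) ^ 2 = 16 * r * Real.exp 12 := by
      rw [mul_pow, Real.sq_sqrt (by positivity), mul_pow, ← Real.exp_nat_mul]
      field_simp
      norm_num
    rw [hsq, Real.exp_neg, div_le_iff₀ (by positivity)]
    field_simp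
    linarith
  have hgrowth : ℓ * (8 * (p : ℝ) ^ 2 / m) ≤ p := by
    rw [← mul_div_assoc, div_le_iff₀ hm]
    calc ℓ * (8 * (p : ℝ) ^ 2) = p * (8 * ℓ * p) := by ring
      _ ≤ p * (8 * L * (2 * r)) := by gcongr
      _ = p * (16 * L * r) := by ring
      _ ≤ p * (8 * Real.exp 6 * L * r) := by gcongr; linarith
      _ ≤ p * m := by gcongr
  calc _ ≤ Real.exp (-12) ^ p * Real.exp p := by
        rw [← Real.exp_nat_mul _ ℓ]
        gcongr
    _ = Real.exp (-(11 * p)) := by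
        rw [← Real.exp_nat_mul, ← Real.exp_add]
        ring_nf
    _ ≤ _ := by gcongr

theorem two_thousand_mul_le (hL : 0 < L) {r : ℝ} (hr : 0 ≤ r)
    (h : 8 * Real.exp 6 * L * r ≤ m) : 2000 * r ≤ m := by
  have hL' : (1 : ℝ) ≤ L := by exact_mod_cast hL
  calc 2000 * r = 2000 * 1 * r := by ring
    _ ≤ 8 * Real.exp 6 * L * r := by
      gcongr
      exact two_thousand_le_eight_mul_exp_six
    _ ≤ m := h

theorem depth_lt_width (hL : 0 < L) {r : ℝ} (hr : 1 ≤ r) (h : 8 * Real.exp 6 * L * r ≤ m) :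
    L < m := by
  have hL' : (0 : ℝ) < L := by exact_mod_cast hL
  have : (L : ℝ) < m :=
    calc (L : ℝ) < 2000 * L * 1 := by linarith
      _ ≤ 8 * Real.exp 6 * L * r := by
        gcongr
        exact two_thousand_le_eight_mul_exp_six
      _ ≤ m := h
  exact_mod_cast this

theorem one_le_mul_log (hs : 1 ≤ s) (hlog : 1 ≤ Real.log m) : 1 ≤ s * Real.log m :=
  one_le_mul_of_one_le_of_one_le (by exact_mod_cast hs) hlog

theorem card_mul_exp_le (hL : 0 < L) (hs : 1 ≤ s) (hlog : 1 ≤ Real.log m)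
    (h : 8 * Real.exp 6 * L * (s * Real.log m) ≤ m) :
    L * ((L + 1) * (((m * (2 * m + 1)) ^ s) ^ 2 * Real.exp (-(11 * (s * Real.log m))))) ≤
      Real.exp (-(3 * (s * Real.log m))) := by
  have hr := one_le_mul_log hs hlog
  have hrm := two_thousand_mul_le hL (zero_le_one.trans hr) h
  have hLm : L + 1 ≤ m := depth_lt_width hL hr h
  have hs' : (1 : ℝ) ≤ s := by exact_mod_cast hs
  have hm : (2000 : ℝ) ≤ m := by linarith
  have hgrid : (m * (2 * m + 1) : ℝ) ≤ m ^ 3 := by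
    rw [pow_succ']
    gcongr
    nlinarith
  have hcount : L * ((L + 1) * ((m * (2 * m + 1) : ℝ) ^ s) ^ 2) ≤
      Real.exp (8 * (s * Real.log m)) :=
    calc L * ((L + 1) * ((m * (2 * m + 1) : ℝ) ^ s) ^ 2) ≤ m * (m * ((m ^ 3 : ℝ) ^ s) ^ 2) := by
          gcongr
          · omega
          · exact_mod_cast hLm
      _ = (m : ℝ) ^ (2 + 6 * s) := by ring
      _ = Real.exp ((2 + 6 * s : ℕ) * Real.log m) := by
          rw [Real.exp_nat_mul, Real.exp_log (by linarith)]
      _ ≤ Real.exp (8 * (s * Real.log m)) := by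
          rw [Real.exp_le_exp]
          push_cast
          nlinarith
  calc _ = L * ((L + 1) * ((m * (2 * m + 1) : ℝ) ^ s) ^ 2) *
        Real.exp (-(11 * (s * Real.log m))) := by ring
    _ ≤ Real.exp (8 * (s * Real.log m)) * Real.exp (-(11 * (s * Real.log m))) := by gcongr
    _ = _ := by
        rw [← Real.exp_add]
        ring_nf

theorem le_exp_mul_log (hs : 1 ≤ s) (hlog : 1 ≤ Real.log m) : (m : ℝ) ≤ Real.exp (s * Real.log m) :=
  (Real.le_exp_log m).trans <| Real.exp_le_exp.mpr <|
    le_mul_of_one_le_left (zero_le_one.trans hlog) (by exact_mod_cast hs)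

end Numerics

theorem ofReal_one_sub_le_measure_compl {Ω : Type*} [MeasurableSpace Ω] {μ : Measure Ω}
    [IsProbabilityMeasure μ] {E : Set Ω} {ε : ℝ} (hε : 0 ≤ ε) (h : μ E ≤ ENNReal.ofReal ε) :
    ENNReal.ofReal (1 - ε) ≤ μ Eᶜ := by
  rw [ENNReal.ofReal_sub _ hε, ENNReal.ofReal_one, tsub_le_iff_right, ← measure_univ (μ := μ)]
  exact (measure_univ_le_add_compl E).trans (by rw [add_comm]; gcongr)

theorem natCast_mul_ofReal (k : ℕ) (r : ℝ) :
    (k : ENNReal) * ENNReal.ofReal r = ENNReal.ofReal (k * r) := by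
  rw [ENNReal.ofReal_mul k.cast_nonneg, ENNReal.ofReal_natCast]

theorem initAW_dead_le_exp (hL : 0 < L) {x : Fin 𝔡 → ℝ} (hx : x ≠ 0) {s : ℕ} (hs : 1 ≤ s)
    (hlog : 1 ≤ Real.log m) (h : 8 * Real.exp 6 * L * (s * Real.log m) ≤ m) :
    initAW 𝔡 m L (alive x L)ᶜ ≤ ENNReal.ofReal (Real.exp (-(3 * (s * Real.log m)))) := by
  have hr := one_le_mul_log hs hlog
  have hrm := two_thousand_mul_le hL (zero_le_one.trans hr) h
  have hLm : (L + 1 : ℝ) ≤ m := by exact_mod_cast depth_lt_width hL hr h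
  have hm : m ≠ 0 := by
    rintro rfl
    norm_num at hlog
  have hhalf : (1 / 2 : ℝ) ≤ Real.exp (-(1 / 2)) := by
    linarith [Real.add_one_le_exp (-(1 / 2) : ℝ)]
  have hexp : (L + 1) * (1 / 2 : ℝ) ^ m ≤ Real.exp (-(3 * (s * Real.log m))) :=
    calc (L + 1) * (1 / 2 : ℝ) ^ m ≤ Real.exp (s * Real.log m) * Real.exp (-(1 / 2)) ^ m := by
          gcongr
          exact hLm.trans (le_exp_mul_log hs hlog)
      _ = Real.exp (s * Real.log m - m / 2) := by
          rw [← Real.exp_nat_mul, ← Real.exp_add]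
          ring_nf
      _ ≤ _ := by
          rw [Real.exp_le_exp]
          linarith
  have hcast : ((L + 1) * (1 / 2) ^ m : ENNReal) = ENNReal.ofReal ((L + 1) * (1 / 2) ^ m) := by
    have := natCast_mul_ofReal (L + 1) ((1 / 2) ^ m)
    rw [ENNReal.ofReal_pow (by positivity), ENNReal.ofReal_div_of_pos two_pos, ENNReal.ofReal_one,
      ENNReal.ofReal_ofNat] at this
    exact_mod_cast this
  exact (initAW_dead_le hm hx le_rfl).trans (hcast.trans_le (ENNReal.ofReal_le_ofReal hexp))

theorem initAW_alive_inter_abs_dot_ge_le_exp (x : Fin 𝔡 → ℝ) (a : ℕ) {u v : Fin m → ℝ}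
    (hu : l2 u ≤ 1) (hv : l2 v ≤ 1) (j : Fin L) {r : ℝ} (hr : 1 ≤ r)
    (h : 8 * Real.exp 6 * L * r ≤ m) :
    initAW 𝔡 m L (alive x j ∩
      {z | 4 * Real.exp 6 * √(r / m) ≤ |dot u (mulVec (layerProd x a j z) v)|}) ≤
      ENNReal.ofReal (Real.exp (-(11 * r))) := by
  have hm := two_thousand_mul_le j.pos (zero_le_one.trans hr) h
  have hm0 : (0 : ℝ) < m := by linarith
  have hpm : 8 * ⌈r⌉₊ ≤ m := by
    have := Nat.ceil_lt_add_one (zero_le_one.trans hr)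
    have : 8 * (⌈r⌉₊ : ℝ) ≤ m := by linarith
    exact_mod_cast this
  exact (initAW_alive_inter_abs_dot_ge_le x a hu hv (Nat.ceil_pos.mpr (by linarith)).ne' hpm j
    (by positivity)).trans (ENNReal.ofReal_le_ofReal (markov_bound_le_exp hr h j.isLt))

theorem initAW_alive_inter_not_hasSparseBound_le (x : Fin 𝔡 → ℝ) (a : ℕ) (j : Fin L) {s : ℕ}
    (hs : 1 ≤ s) (hlog : 1 ≤ Real.log m) (h : 8 * Real.exp 6 * L * (s * Real.log m) ≤ m) :
    initAW 𝔡 m L (alive x j ∩ {z | ¬ HasSparseBound (layerProd x a j z) s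
      (8 * Real.exp 6 * √(s * Real.log m / m))}) ≤
      ENNReal.ofReal ((((m * (2 * m + 1)) ^ s) ^ 2 : ℕ) *
        Real.exp (-(11 * (s * Real.log m)))) := by
  have hr := one_le_mul_log hs hlog
  have hrm := two_thousand_mul_le j.pos (zero_le_one.trans hr) h
  have hsm : 2000 * s ≤ m := by
    have : (2000 * s : ℝ) ≤ m := by
      linarith [le_mul_of_one_le_right (Nat.cast_nonneg (α := ℝ) s) hlog]
    exact_mod_cast this
  rw [show 8 * Real.exp 6 * √(s * Real.log m / m) = 2 * (4 * Real.exp 6 * √(s * Real.log m / m))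
    by ring, ← natCast_mul_ofReal]
  exact_mod_cast measure_inter_not_hasSparseBound_le _ (by omega) (by omega) (by nlinarith) _
    fun u v hu hv => initAW_alive_inter_abs_dot_ge_le_exp x a hu hv j hr h

theorem initAW_not_forall_hasSparseBound_le (hL : 0 < L) {x : Fin 𝔡 → ℝ} (hx : x ≠ 0) {s : ℕ}
    (hs : 1 ≤ s) (hlog : 1 ≤ Real.log m) (h : 8 * Real.exp 6 * L * (s * Real.log m) ≤ m) :
    initAW 𝔡 m L {z | ¬ ∀ (j : Fin L) (a : ℕ), a ≤ L →
      HasSparseBound (layerProd x a j z) s (8 * Real.exp 6 * √(s * Real.log m / m))} ≤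
      ENNReal.ofReal (2 * Real.exp (-(3 * (s * Real.log m)))) := by
  set b := 8 * Real.exp 6 * √(s * Real.log m / m)
  set r := s * Real.log m
  have hsub : {z : Weights 𝔡 m L | ¬ ∀ (j : Fin L) (a : ℕ), a ≤ L →
      HasSparseBound (layerProd x a j z) s b} ⊆ (alive x L)ᶜ ∪ ⋃ (j : Fin L) (a : Fin (L + 1)),
        alive x j ∩ {z | ¬ HasSparseBound (layerProd x a j z) s b} := by
    intro z hz
    simp only [Set.mem_ofPred_eq, not_forall] at hz
    obtain ⟨j, a, ha, hz⟩ := hz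
    refine (em (z ∈ alive x L)).symm.imp_right fun hL => ?_
    exact Set.mem_iUnion₂.mpr ⟨j, ⟨a, by omega⟩, alive_antitone x j.isLt.le hL, hz⟩
  calc _ ≤ initAW 𝔡 m L (alive x L)ᶜ + ∑ j : Fin L, ∑ a : Fin (L + 1),
        initAW 𝔡 m L (alive x j ∩ {z | ¬ HasSparseBound (layerProd x a j z) s b}) :=
        (measure_mono hsub).trans <| (measure_union_le _ _).trans <| add_le_add_right
          ((measure_iUnion_fintype_le _ _).trans <| Finset.sum_le_sum fun j _ =>
            measure_iUnion_fintype_le _ _) _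
    _ ≤ ENNReal.ofReal (Real.exp (-(3 * r))) + ENNReal.ofReal (Real.exp (-(3 * r))) := by
        refine add_le_add (initAW_dead_le_exp hL hx hs hlog h) <|
          (Finset.sum_le_sum fun j _ => Finset.sum_le_sum fun (a : Fin (L + 1)) _ =>
            initAW_alive_inter_not_hasSparseBound_le x a j hs hlog h).trans ?_
        simp only [Finset.sum_const, Finset.card_univ, Fintype.card_fin, nsmul_eq_mul,
          natCast_mul_ofReal]
        exact ENNReal.ofReal_le_ofReal (by exact_mod_cast card_mul_exp_le hL hs hlog h)
    _ = _ := by rw [← ENNReal.ofReal_add (by positivity) (by positivity), ← two_mul]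

theorem initAW_iUnion_not_forall_hasSparseBound_le {n s : ℕ} (hL : 0 < L) (hnm : n ≤ m)
    {x : Fin n → Fin 𝔡 → ℝ} (hx : ∀ i, x i ≠ 0) (hs : 1 ≤ s) (hlog : 1 ≤ Real.log m)
    (h : 8 * Real.exp 6 * L * (s * Real.log m) ≤ m) :
    initAW 𝔡 m L (⋃ i, {z | ¬ ∀ (j : Fin L) (a : ℕ), a ≤ L →
      HasSparseBound (layerProd (x i) a j z) s (8 * Real.exp 6 * √(s * Real.log m / m))}) ≤
      ENNReal.ofReal (Real.exp (-(s * Real.log m))) := by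
  set r := s * Real.log m
  have hr1 : 1 ≤ r := one_le_mul_log hs hlog
  have hn : (n : ℝ) ≤ Real.exp r := (Nat.cast_le.mpr hnm).trans (le_exp_mul_log hs hlog)
  have h2 : 2 ≤ Real.exp r := by linarith [Real.add_one_le_exp r]
  calc _ ≤ ∑ _i : Fin n, ENNReal.ofReal (2 * Real.exp (-(3 * r))) :=
        (measure_iUnion_fintype_le _ _).trans <| Finset.sum_le_sum fun i _ =>
          initAW_not_forall_hasSparseBound_le hL (hx i) hs hlog h
    _ = ENNReal.ofReal (n * (2 * Real.exp (-(3 * r)))) := by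
        rw [Finset.sum_const, Finset.card_univ, Fintype.card_fin, nsmul_eq_mul,
          ENNReal.ofReal_mul n.cast_nonneg, ENNReal.ofReal_natCast]
    _ ≤ ENNReal.ofReal (Real.exp r * (Real.exp r * Real.exp (-(3 * r)))) := by gcongr
    _ = _ := by
        rw [← Real.exp_add, ← Real.exp_add]
        ring_nf

theorem statement7_general (𝔡 m L n : ℕ) (hL : 0 < L) (hm : 2 ≤ m) (hnm : n ≤ m)
    (x : Fin n → Fin 𝔡 → ℝ) (hx : ∀ i, x i ≠ 0) (s : ℕ) (hs : 1 ≤ s)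
    (hsm : s ≤ m / (8 * Real.exp 6 * L * Real.log m)) :
    ENNReal.ofReal (1 - Real.exp (-(s * Real.log m))) ≤
      initAW 𝔡 m L
        {z | ∀ (i : Fin n) (a b : ℕ), 1 ≤ a → a ≤ b → b ≤ L →
          ∀ u v : Fin m → ℝ, l0 u ≤ s → l0 v ≤ s →
            |dot u (mulVec (mmul (Wat z.2 b) (prodDW z.1 z.2 (x i) a (b - 1))) v)| ≤
              8 * Real.exp 6 * l2 u * l2 v * √(s * Real.log m / m)} := by
  have h : 8 * Real.exp 6 * L * (s * Real.log m) ≤ m := by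
    have := mul_le_of_le_div₀ m.cast_nonneg (by positivity) hsm
    linarith
  have hlog := one_le_log_of_sparsity hL hm hs h
  have hbad := initAW_iUnion_not_forall_hasSparseBound_le hL hnm hx hs hlog h
  refine (ofReal_one_sub_le_measure_compl (Real.exp_pos _).le hbad).trans (measure_mono ?_)
  intro z hz i a b _ hab hbL u v hu hv
  simp only [Set.mem_compl_iff, Set.mem_iUnion, Set.mem_ofPred_eq, not_exists, not_not] at hz
  obtain ⟨j, rfl⟩ : ∃ j, b = j + 1 := ⟨b - 1, by omega⟩
  have hbound := hz i ⟨j, hbL⟩ a (hab.trans hbL) u v hu hv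
  rw [Wat_succ z.2 ⟨j, hbL⟩, Nat.add_sub_cancel]
  exact hbound.trans_eq (by ring)

/-- Lemma 7.2 d, sparse bilinear bound for intermediate layers. -/
theorem statement7 :
    ∃ C c : ℝ, 0 < C ∧ 0 < c ∧
      ∀ (𝔡 m L n : ℕ) (h𝔡 : 0 < 𝔡) (hL : 2 ≤ L) (hm : 0 < m) (hn : 0 < n)
        (x : Fin n → Fin 𝔡 → ℝ), (∀ i, l2 (x i) = 1) →
        C * (n : ℝ) * (L : ℝ) * Real.log ((n : ℝ) * (L : ℝ)) ≤ (m : ℝ) →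
        ∀ s : ℕ, 1 ≤ s → (s : ℝ) ≤ (m : ℝ) / (C * (L : ℝ) * Real.log m) →
        ENNReal.ofReal (1 - Real.exp (-(c * (s : ℝ) * Real.log m))) ≤
          initAW 𝔡 m L
            {z | ∀ (i : Fin n) (a b : ℕ), 1 ≤ a → a ≤ b → b ≤ L →
              ∀ u v : Fin m → ℝ, l0 u ≤ s → l0 v ≤ s →
                |dot u (mulVec (mmul (Wat z.2 b) (prodDW z.1 z.2 (x i) a (b - 1))) v)| ≤
                  C * l2 u * l2 v * Real.sqrt ((s : ℝ) * Real.log m / (m : ℝ))} := by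
  refine ⟨8 * Real.exp 6, 1, by positivity, one_pos, ?_⟩
  intro 𝔡 m L n _ hL _ hn x hx hwidth s hs hsm
  have hnm : n * 2 ≤ m := mul_two_le_of_width hL hn hwidth
  have hx0 i : x i ≠ 0 := fun h => by simpa [l2_eq_zero_iff.mpr h] using hx i
  simpa only [one_mul] using
    statement7_general 𝔡 m L n (by omega) (by omega) (by omega) x hx0 s hs hsm

end DNNPaper
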